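/- arXiv:math/0406339 — 6 statements merged into one kernel-verified Lean document; each statement's English description precedes it below -/
import Mathlib

section
/- Let M be a regular matroid on a finite ground set E, represented as the column matroid of a real r×E matrix A of full row rank r all of whose square submatrices have determinant in {0, 1, −1} (the bases of M are the r-element subsets S ⊆ E with det A[S] ≠ 0, where A[S] is the submatrix on the columns S). Let π = (S, T, C_1, …, C_k) be a partition of E into pairwise disjoint nonempty subsets and let c_1, …, c_k be nonnegative integers. For 0 ≤ j ≤ |S| let M_j(π) be the number of bases B of M with |B ∩ S| = j and |B ∩ C_i| = c_i for all 1 ≤ i ≤ k. Then for every 1 ≤ j ≤ |S| − 1: M_j(π)² / C(|S|,j)² ≥ (M_{j−1}(π) / C(|S|,j−1)) · (M_{j+1}(π) / C(|S|,j+1)), where C(n,j) denotes the binomial coefficient. -/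
open scoped BigOperators
open Classical

noncomputable section

/-- `B` is a basis of the column matroid of the `r × E` matrix `A`: the square submatrix of
`A` on the columns `B` (for some, equivalently any, indexing of `B` by `Fin r`) has nonzero
determinant. -/
def IsColBasis {r : ℕ} {E : Type*} {F : Type*} [Field F]
    (A : Matrix (Fin r) E F) (B : Finset E) : Prop :=
  ∃ g : Fin r ≃ ↥B, (A.submatrix id (fun i : Fin r => ((g i : ↥B) : E))).det ≠ 0

/-- The number `M_j(π)` of bases `B` of the column matroid of `A` with `|B ∩ S| = j` and
`|B ∩ C i| = c i` for all `i`. -/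
noncomputable def basisCount {r : ℕ} {E : Type*} [Fintype E] {F : Type*} [Field F]
    (A : Matrix (Fin r) E F) {k : ℕ} (S : Finset E) (C : Fin k → Finset E) (c : Fin k → ℕ)
    (j : ℕ) : ℕ :=
  Nat.card {B : Finset E // IsColBasis A B ∧ (B ∩ S).card = j ∧ ∀ i, (B ∩ C i).card = c i}


namespace StanleyAux

section Poly

open Polynomial Filter Topology

/-- A complex polynomial without zeros in the open upper half-plane. -/
def UStab (p : ℂ[X]) : Prop := ∀ z : ℂ, 0 < z.im → p.eval z ≠ 0

theorem UStab.deriv_sub {p : ℂ[X]} (hp : UStab p) {ε : ℝ} (hε : 0 < ε) :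
    UStab (derivative p - ((ε : ℂ) * Complex.I) • p) := by
  intro z hz h0
  have hpz := hp z hz
  have hs : p.Splits := IsAlgClosed.splits p
  have h1 := hs.eval_derivative_div_eval_of_ne_zero hpz
  simp only [eval_sub, eval_smul, smul_eq_mul, sub_eq_zero] at h0
  rw [h0, mul_div_assoc, div_self hpz, mul_one] at h1
  have h2 : ((p.roots.map fun w ↦ 1 / (z - w)).sum).im ≤ 0 := by
    have hr : ∀ w ∈ p.roots, w.im ≤ 0 := by
      intro w hw
      by_contra hlt
      push Not at hlt
      exact hp w hlt (isRoot_of_mem_roots hw)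
    generalize p.roots = m at hr
    induction m using Multiset.induction_on with
    | empty => simp
    | cons a s ih =>
      rw [Multiset.map_cons, Multiset.sum_cons, Complex.add_im]
      have h3 := ih (fun w hw => hr w (Multiset.mem_cons_of_mem hw))
      have h4 := hr a (Multiset.mem_cons_self a s)
      have h5 : (1 / (z - a)).im ≤ 0 := by
        rw [one_div, Complex.inv_im]
        apply div_nonpos_of_nonpos_of_nonneg
        · simp only [Complex.sub_im]; linarith
        · exact Complex.normSq_nonneg _
      linarith
  rw [← h1] at h2
  simp at h2
  linarith

/-- The functional `p ↦ ((D - a)^c p)(a)`. -/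
def fnl (a : ℂ) : ℕ → (ℂ[X] →ₗ[ℂ] ℂ)
  | 0 => leval a
  | c + 1 => (fnl a c) ∘ₗ (derivative - a • LinearMap.id)

theorem fnl_good {ε : ℝ} (hε : 0 < ε) (c : ℕ) :
    ∀ p : ℂ[X], UStab p → fnl ((ε : ℂ) * Complex.I) c p ≠ 0 := by
  induction c with
  | zero => intro p hp; exact hp _ (by simpa using hε)
  | succ c ih => intro p hp; exact ih _ (hp.deriv_sub hε)

theorem fnl_succ (a : ℂ) (c : ℕ) (p : ℂ[X]) :
    fnl a (c + 1) p = fnl a c (derivative p) - a * fnl a c p := by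
  simp [fnl]

theorem fnl_cont (c : ℕ) : ∀ p : ℂ[X], Continuous fun a => fnl a c p := by
  induction c with
  | zero => intro p; exact p.continuous
  | succ c ih =>
    intro p
    simp only [fnl_succ]
    exact (ih _).sub (continuous_id.mul (ih _))

theorem fnl_zero (c : ℕ) : ∀ p : ℂ[X], fnl 0 c p = (derivative^[c] p).eval 0 := by
  induction c with
  | zero => intro p; rfl
  | succ c ih => intro p; rw [fnl_succ, ih]; simp

theorem fnl_zero_X_pow (c n : ℕ) :
    fnl 0 c (X ^ n) = if n = c then (c.factorial : ℂ) else 0 := by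
  rw [fnl_zero, ← coeff_zero_eq_eval_zero, coeff_iterate_derivative, coeff_X_pow]
  by_cases h : n = c
  · subst h; simp [Nat.descFactorial_self]
  · rw [if_neg h, if_neg (by omega)]; simp

/-- Functionals that do not vanish on stable polynomials. -/
def Good (L : ℂ[X] →ₗ[ℂ] ℂ) : Prop := ∀ p : ℂ[X], UStab p → L p ≠ 0

theorem multi {β V : Type*} [Fintype β] [Fintype V] (w : β → ℂ) (n : β → V → ℕ)
    (h : ∀ z : V → ℂ, (∀ v, 0 < (z v).im) → ∑ b, w b * ∏ v, z v ^ n b v ≠ 0)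
    (L : V → (ℂ[X] →ₗ[ℂ] ℂ)) (hL : ∀ v, Good (L v)) :
    ∑ b, w b * ∏ v, L v (X ^ n b v) ≠ 0 := by
  suffices H : ∀ I : Finset V, ∀ L : V → (ℂ[X] →ₗ[ℂ] ℂ), (∀ v ∈ I, Good (L v)) →
      (∀ v ∉ I, ∃ z : ℂ, 0 < z.im ∧ L v = leval z) →
      ∑ b, w b * ∏ v, L v (X ^ n b v) ≠ 0 from
    H Finset.univ L (fun v _ => hL v) (fun v hv => absurd (Finset.mem_univ v) hv)
  intro I
  induction I using Finset.induction_on with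
  | empty =>
    intro L _ h2
    choose z hz hLz using fun v => h2 v (Finset.notMem_empty v)
    have := h z hz
    simpa [hLz] using this
  | insert i I hi ih =>
    intro L h1 h2
    set p : ℂ[X] := ∑ b, (w b * ∏ v ∈ Finset.univ.erase i, L v (X ^ n b v)) • X ^ n b i with hp
    have key : ∀ M : ℂ[X] →ₗ[ℂ] ℂ,
        M p = ∑ b, w b * ∏ v, (Function.update L i M) v (X ^ n b v) := by
      intro M
      rw [hp, map_sum]
      refine Finset.sum_congr rfl fun b _ => ?_
      rw [map_smul, smul_eq_mul, ← Finset.prod_erase_mul _ _ (Finset.mem_univ i), mul_assoc]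
      congr 2
      · refine Finset.prod_congr rfl fun v hv => ?_
        rw [Function.update_of_ne (Finset.ne_of_mem_erase hv)]
      · simp
    have hps : UStab p := by
      intro z hz
      have e := key (leval z)
      rw [leval_apply] at e
      rw [e]
      apply ih
      · intro v hv
        have hvi : v ≠ i := fun h => hi (h ▸ hv)
        rw [Function.update_of_ne hvi]
        exact h1 v (Finset.mem_insert_of_mem hv)
      · intro v hv
        by_cases hvi : v = i
        · subst hvi; exact ⟨z, hz, by simp⟩
        · rw [Function.update_of_ne hvi]
          exact h2 v (by simp [hvi, hv])
    have := h1 i (Finset.mem_insert_self i I) p hps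
    rwa [key, Function.update_eq_self] at this

theorem UStab.bound {p : ℂ[X]} (hp : UStab p) {d : ℕ} (hd : p.natDegree ≤ d) {z₀ : ℂ}
    (hz : 0 < z₀.im) (z : ℂ) :
    ‖p.eval z‖ ≤ ‖p.eval z₀‖ * (1 + ‖z - z₀‖ / z₀.im) ^ d := by
  have hs : p.Splits := IsAlgClosed.splits p
  set K := ‖z - z₀‖ / z₀.im with hK
  have hK0 : 0 ≤ K := by positivity
  have h1 : ‖p.eval z‖ ≤ ‖p.eval z₀‖ * (1 + K) ^ p.natDegree := by
    rw [hs.eval_eq_prod_roots, hs.eval_eq_prod_roots, hs.natDegree_eq_card_roots, norm_mul,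
      norm_mul, mul_assoc]
    refine mul_le_mul_of_nonneg_left ?_ (norm_nonneg _)
    have hr : ∀ w ∈ p.roots, w.im ≤ 0 := by
      intro w hw
      by_contra hlt
      push Not at hlt
      exact hp w hlt (isRoot_of_mem_roots hw)
    generalize p.roots = m at hr
    induction m using Multiset.induction_on with
    | empty => simp
    | cons a s ih =>
      have h3 := ih (fun w hw => hr w (Multiset.mem_cons_of_mem hw))
      have h4 := hr a (Multiset.mem_cons_self a s)
      rw [Multiset.map_cons, Multiset.prod_cons, Multiset.map_cons, Multiset.prod_cons,
        norm_mul, norm_mul, Multiset.card_cons, pow_succ]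
      have h5 : ‖z - a‖ ≤ ‖z₀ - a‖ * (1 + K) := by
        have h6 : z₀.im ≤ ‖z₀ - a‖ := by
          have := Complex.abs_im_le_norm (z₀ - a)
          have h7 := le_abs_self (z₀ - a).im
          simp only [Complex.sub_im] at this h7
          linarith
        have h8 : ‖z - z₀‖ ≤ ‖z₀ - a‖ * K := by
          have : ‖z - z₀‖ = z₀.im * K := by rw [hK]; field_simp
          rw [this]
          exact mul_le_mul_of_nonneg_right h6 hK0
        have h9 : ‖z - a‖ ≤ ‖z - z₀‖ + ‖z₀ - a‖ := norm_sub_le_norm_sub_add_norm_sub _ _ _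
        linarith
      calc _ ≤ (‖z₀ - a‖ * (1 + K)) * (‖(s.map fun x => z₀ - x).prod‖ * (1 + K) ^ s.card) :=
            mul_le_mul h5 h3 (norm_nonneg _) (by positivity)
        _ = _ := by ring
  exact h1.trans (mul_le_mul_of_nonneg_left (pow_le_pow_right₀ (by linarith) hd) (norm_nonneg _))

theorem splits_of_limit {q : ℝ[X]} (d : ℕ) (Q : ℝ → ℂ[X])
    (hQ : ∀ ε > 0, UStab (Q ε)) (hd : ∀ ε > 0, (Q ε).natDegree ≤ d)
    (hlim : ∀ z, Tendsto (fun ε => (Q ε).eval z) (𝓝[>] 0)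
      (𝓝 ((q.map Complex.ofRealHom).eval z))) : q.Splits := by
  by_cases hq : q = 0
  · rw [hq]; exact Splits.zero
  set p := q.map Complex.ofRealHom with hpdef
  have hp0 : p ≠ 0 := by
    rw [hpdef]; exact (Polynomial.map_ne_zero_iff Complex.ofRealHom.injective).2 hq
  have hp : UStab p := by
    intro z₀ hz₀ h0
    apply hp0
    apply Polynomial.funext
    intro z
    have hb : ‖p.eval z‖ ≤ ‖p.eval z₀‖ * (1 + ‖z - z₀‖ / z₀.im) ^ d := by
      refine le_of_tendsto_of_tendsto (hlim z).norm ((hlim z₀).norm.mul_const _) ?_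
      filter_upwards [self_mem_nhdsWithin] with ε hε
      exact (hQ ε hε).bound (hd ε hε) hz₀ z
    rw [h0] at hb
    simpa using hb
  refine Splits.of_splits_map_of_injective Complex.ofRealHom.injective (IsAlgClosed.splits p) ?_
  intro a ha
  have ha0 : p.eval a = 0 := isRoot_of_mem_roots ha
  have him : a.im = 0 := by
    rcases lt_trichotomy a.im 0 with h | h | h
    · exfalso
      refine hp (starRingEnd ℂ a) (by simpa using h) ?_
      have e := Polynomial.hom_eval₂ q Complex.ofRealHom (starRingEnd ℂ) a
      rw [← eval_map, ← hpdef, ha0, map_zero] at e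
      rw [hpdef, eval_map, e]
      congr 1
      ext x
      simp
    · exact h
    · exact absurd ha0 (hp a h)
  exact ⟨a.re, Complex.ext (by simp) (by simp [him])⟩

theorem splits_derivative {p : ℝ[X]} (hp : p.Splits) : (derivative p).Splits := by
  rw [splits_iff_card_roots] at *
  have h1 := p.card_roots_le_derivative
  have h2 := (derivative p).card_roots'
  have h3 := natDegree_derivative_lt (p := p)
  by_cases h : p.natDegree = 0
  · have : derivative p = 0 := by
      rw [eq_C_of_natDegree_eq_zero h]; simp
    simp [this]
  · have := h3 h
    omega

theorem splits_iterate_derivative {p : ℝ[X]} (hp : p.Splits) (k : ℕ) :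
    (derivative^[k] p).Splits := by
  induction k with
  | zero => exact hp
  | succ k ih => rw [Function.iterate_succ_apply']; exact splits_derivative ih

theorem splits_reverse {p : ℝ[X]} (hp : p.Splits) : p.reverse.Splits := by
  induction hp using Submonoid.closure_induction with
  | mem p hp =>
    obtain (⟨r, rfl⟩ | ⟨a, rfl⟩) := hp
    · simp
    · apply Splits.of_natDegree_le_one
      exact (reverse_natDegree_le _).trans (by simp)
  | one => rw [← C_1, reverse_C]; exact Splits.C _
  | mul x y _ _ hx hy => rw [reverse_mul_of_domain]; exact hx.mul hy

theorem splits_reflect {p : ℝ[X]} (hp : p.Splits) {N : ℕ} (hN : p.natDegree ≤ N) :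
    (p.reflect N).Splits := by
  obtain ⟨k, rfl⟩ := Nat.exists_eq_add_of_le hN
  have := reflect_mul p 1 le_rfl (G := k) (by simp)
  rw [mul_one] at this
  rw [this]
  refine (splits_reverse hp).mul ?_
  rw [← C_1, reflect_C]
  exact (Splits.C _).mul (Splits.X.pow _)

theorem disc_of_splits {p : ℝ[X]} (hp : p.Splits) (hd : p.natDegree ≤ 2) :
    4 * p.coeff 0 * p.coeff 2 ≤ p.coeff 1 ^ 2 := by
  by_cases h2 : p.coeff 2 = 0
  · rw [h2]; nlinarith [sq_nonneg (p.coeff 1)]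
  have hdeg : p.natDegree = 2 := le_antisymm hd (le_natDegree_of_ne_zero h2)
  have hx : ∃ x, p.eval x = 0 := hp.exists_eval_eq_zero (by
    intro h; have := natDegree_eq_of_degree_eq_some h; rw [hdeg] at this; norm_num at this)
  obtain ⟨x, hx⟩ := hx
  rw [eval_eq_sum_range, hdeg] at hx
  simp [Finset.sum_range_succ] at hx
  have : p.coeff 1 ^ 2 - 4 * p.coeff 0 * p.coeff 2 = (2 * p.coeff 2 * x + p.coeff 1) ^ 2 := by
    linear_combination (-4 * p.coeff 2) * hx
  nlinarith [sq_nonneg (2 * p.coeff 2 * x + p.coeff 1)]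

theorem newton {p : ℝ[X]} (hp : p.Splits) {n j : ℕ} (hn : p.natDegree ≤ n) (hj1 : 1 ≤ j)
    (hj2 : j + 1 ≤ n) :
    (p.coeff (j - 1) / (n.choose (j - 1) : ℝ)) * (p.coeff (j + 1) / (n.choose (j + 1) : ℝ)) ≤
      (p.coeff j / (n.choose j : ℝ)) ^ 2 := by
  obtain ⟨i, rfl⟩ := Nat.exists_eq_add_of_le' hj1
  obtain ⟨l, rfl⟩ := Nat.exists_eq_add_of_le hj2
  simp only [Nat.add_sub_cancel]
  have e1 : (derivative^[i] p).natDegree ≤ l + 2 :=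
    (natDegree_iterate_derivative p i).trans (by omega)
  have s3 := splits_iterate_derivative (splits_reflect (splits_iterate_derivative hp i) e1) l
  have e3 : (derivative^[l] (reflect (l + 2) (derivative^[i] p))).natDegree ≤ 2 := by
    refine (natDegree_iterate_derivative _ l).trans ?_
    have : (reflect (l + 2) (derivative^[i] p)).natDegree ≤ l + 2 := by
      rw [natDegree_le_iff_coeff_eq_zero]
      intro N hN
      rw [coeff_reflect, revAt_eq_self_of_lt hN]
      exact coeff_eq_zero_of_natDegree_lt (by omega)
    omega
  have hdisc := disc_of_splits s3 e3
  simp only [coeff_iterate_derivative, coeff_reflect] at hdisc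
  rw [revAt_le (by omega : 0 + l ≤ l + 2), revAt_le (by omega : 1 + l ≤ l + 2),
    revAt_le (by omega : 2 + l ≤ l + 2), show l + 2 - (0 + l) = 2 by omega,
    show l + 2 - (1 + l) = 1 by omega, show l + 2 - (2 + l) = 0 by omega] at hdisc
  have d0 : ∀ t : ℕ, ((0 + t).descFactorial t : ℝ) = t.factorial := by
    intro t; rw [zero_add, Nat.descFactorial_self]
  have d1 : ∀ t : ℕ, ((1 + t).descFactorial t : ℝ) = (t + 1) * t.factorial := by
    intro t
    have h := Nat.factorial_mul_descFactorial (Nat.le_add_left t 1)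
    rw [Nat.add_sub_cancel, add_comm 1 t, Nat.factorial_one, one_mul, Nat.factorial_succ] at h
    rw [add_comm 1 t, h]; push_cast; ring
  have d2 : ∀ t : ℕ, ((2 + t).descFactorial t : ℝ) = (t + 2) * (t + 1) * t.factorial / 2 := by
    intro t
    have h := Nat.factorial_mul_descFactorial (Nat.le_add_left t 2)
    rw [Nat.add_sub_cancel, add_comm 2 t, Nat.factorial_two, Nat.factorial_succ (t + 1),
      Nat.factorial_succ t] at h
    have h' : (2 : ℝ) * ((t + 2).descFactorial t : ℝ) = (t + 1 + 1) * ((t + 1) * t.factorial) := by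
      exact_mod_cast h
    rw [add_comm 2 t]; linarith
  simp only [nsmul_eq_mul, d0, d1, d2] at hdisc
  rw [zero_add, add_comm 2 i, add_comm 1 i] at hdisc
  have c0 : ((i + 1 + 1 + l).choose i : ℝ) =
      (i + 1 + 1 + l).factorial / (i.factorial * ((l + 2) * ((l + 1) * l.factorial))) := by
    rw [show i + 1 + 1 + l = i + (l + 1 + 1) by ring, Nat.cast_add_choose, Nat.factorial_succ (l + 1),
      Nat.factorial_succ l]
    push_cast; ring
  have c1 : ((i + 1 + 1 + l).choose (i + 1) : ℝ) =
      (i + 1 + 1 + l).factorial / ((i + 1) * i.factorial * ((l + 1) * l.factorial)) := by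
    rw [show i + 1 + 1 + l = (i + 1) + (l + 1) by ring, Nat.cast_add_choose, Nat.factorial_succ i,
      Nat.factorial_succ l]
    push_cast; ring
  have c2 : ((i + 1 + 1 + l).choose (i + 1 + 1) : ℝ) =
      (i + 1 + 1 + l).factorial / ((i + 2) * ((i + 1) * i.factorial) * l.factorial) := by
    rw [Nat.cast_add_choose, Nat.factorial_succ (i + 1), Nat.factorial_succ i]
    push_cast; ring
  rw [c0, c1, c2]
  have hN : (0 : ℝ) < (i + 1 + 1 + l).factorial := by exact_mod_cast Nat.factorial_pos _
  generalize ((i + 1 + 1 + l).factorial : ℝ) = N at hN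
  rw [div_div_eq_mul_div, div_div_eq_mul_div, div_div_eq_mul_div, div_mul_div_comm, div_pow,
    ← pow_two]
  apply div_le_div_of_nonneg_right _ (by positivity)
  refine le_trans (le_of_eq ?_) (hdisc.trans (le_of_eq ?_)) <;> ring

end Poly

section Mat

theorem det_mul_eq_sum {r : ℕ} {E : Type*} [Fintype E] (M : Matrix (Fin r) E ℂ)
    (N : Matrix E (Fin r) ℂ) :
    (M * N).det = ∑ f : Fin r → E, (∏ i, N (f i) i) * (M.submatrix id f).det := by
  simp only [Matrix.det_apply', Matrix.mul_apply, Finset.prod_univ_sum, Fintype.piFinset_univ,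
    Finset.mul_sum, Matrix.submatrix_apply, id]
  rw [Finset.sum_comm]
  refine Finset.sum_congr rfl fun f _ => Finset.sum_congr rfl fun σ _ => ?_
  rw [Finset.prod_mul_distrib]
  ring

theorem factorial_mul_det {r : ℕ} {E : Type*} [Fintype E] (M : Matrix (Fin r) E ℂ)
    (N : Matrix E (Fin r) ℂ) :
    (r.factorial : ℂ) * (M * N).det =
      ∑ f : Fin r → E, (M.submatrix id f).det * (N.submatrix f id).det := by
  have h : ∀ σ : Equiv.Perm (Fin r), (M * N).det =
      ∑ f : Fin r → E, (M.submatrix id f).det *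
        ((Equiv.Perm.sign σ : ℤ) * ∏ i, N (f (σ i)) i) := by
    intro σ
    rw [det_mul_eq_sum, ← Equiv.sum_comp (Equiv.arrowCongr σ.symm (Equiv.refl E))]
    refine Finset.sum_congr rfl fun f _ => ?_
    have : M.submatrix id ((Equiv.arrowCongr σ.symm (Equiv.refl E)) f) =
        (M.submatrix id f).submatrix id σ := by
      ext a b; simp [Equiv.arrowCongr]
    rw [this, Matrix.det_permute']
    simp [Equiv.arrowCongr]
    ring
  have h2 : ∑ _σ : Equiv.Perm (Fin r), (M * N).det = (r.factorial : ℂ) * (M * N).det := by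
    simp [Fintype.card_perm]
  rw [← h2, Finset.sum_congr rfl (fun σ _ => h σ), Finset.sum_comm]
  refine Finset.sum_congr rfl fun f _ => ?_
  rw [← Finset.mul_sum, Matrix.det_apply' (N.submatrix f id)]
  rfl

theorem det_ne_zero_aux {r : ℕ} {E : Type*} [Fintype E] (A : Matrix (Fin r) E ℝ)
    (hrank : A.rank = r) (z : E → ℂ) (hz : ∀ e, 0 < (z e).im) :
    (A.map Complex.ofRealHom * (Matrix.diagonal z * (A.map Complex.ofRealHom).transpose)).det
      ≠ 0 := by
  intro h0
  obtain ⟨v, hv, hv0⟩ := Matrix.exists_mulVec_eq_zero_iff.2 h0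
  set A' := A.map Complex.ofRealHom with hA'
  set u := A'.transpose.mulVec v with hu
  have h1 : A'.mulVec (fun e => z e * u e) = 0 := by
    rw [← hv0, ← Matrix.mulVec_mulVec, ← Matrix.mulVec_mulVec, ← hu]
    congr 1
    ext e
    rw [Matrix.mulVec_diagonal]
  have h2 : ∑ e, z e * (Complex.normSq (u e) : ℂ) = 0 := by
    have h3 : (star v) ⬝ᵥ (A'.mulVec (fun e => z e * u e)) = 0 := by rw [h1]; simp
    rw [Matrix.dotProduct_mulVec] at h3
    rw [← h3, dotProduct]
    refine Finset.sum_congr rfl fun e _ => ?_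
    have : (Matrix.vecMul (star v) A') e = (starRingEnd ℂ) (u e) := by
      simp [hu, Matrix.vecMul, Matrix.mulVec, dotProduct, hA', map_sum, mul_comm]
    rw [this, Complex.normSq_eq_conj_mul_self]
    ring
  have h4 : ∑ e, (z e).im * Complex.normSq (u e) = 0 := by
    have := congrArg Complex.im h2
    simpa [Complex.im_sum] using this
  have h5 : u = 0 := by
    rw [Finset.sum_eq_zero_iff_of_nonneg
      (fun e _ => mul_nonneg (hz e).le (Complex.normSq_nonneg _))] at h4
    ext e
    have := h4 e (Finset.mem_univ e)
    rcases mul_eq_zero.1 this with h | h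
    · exact absurd h (hz e).ne'
    · simpa using h
  have h6 : (A * A.transpose).det ≠ 0 := by
    have h7 : (A * A.transpose).rank = Fintype.card (Fin r) := by
      rw [Matrix.rank_self_mul_transpose, hrank, Fintype.card_fin]
    have h8 : LinearIndependent ℝ (A * A.transpose).row := by
      rw [linearIndependent_iff_card_eq_finrank_span, ← h7, Matrix.rank_eq_finrank_span_row]
      rfl
    exact ((Matrix.isUnit_iff_isUnit_det _).1 (Matrix.linearIndependent_rows_iff_isUnit.1 h8)).ne_zero
  have h9 : (A' * A'.transpose).det ≠ 0 := by
    have : A' * A'.transpose = Complex.ofRealHom.mapMatrix (A * A.transpose) := by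
      ext a b
      simp [hA', Matrix.mul_apply]
    rw [this, ← RingHom.map_det]
    simpa using h6
  apply h9
  refine Matrix.exists_mulVec_eq_zero_iff.1 ⟨v, hv, ?_⟩
  rw [← Matrix.mulVec_mulVec, ← hu, h5, Matrix.mulVec_zero]

theorem sum_ne_zero_aux {r : ℕ} {E : Type*} [Fintype E] (A : Matrix (Fin r) E ℝ)
    (hrank : A.rank = r) (z : E → ℂ) (hz : ∀ e, 0 < (z e).im) :
    ∑ f : Fin r → E, (((A.submatrix id f).det ^ 2 : ℝ) : ℂ) * ∏ i, z (f i) ≠ 0 := by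
  have h := det_ne_zero_aux A hrank z hz
  have h2 := factorial_mul_det (A.map Complex.ofRealHom)
    (Matrix.diagonal z * (A.map Complex.ofRealHom).transpose)
  have h3 : (r.factorial : ℂ) ≠ 0 := by exact_mod_cast r.factorial_ne_zero
  have h4 := mul_ne_zero h3 h
  rw [h2] at h4
  convert h4 using 2 with f
  have e1 : (A.map Complex.ofRealHom).submatrix id f =
      Complex.ofRealHom.mapMatrix (A.submatrix id f) := rfl
  have e2 : (Matrix.diagonal z * (A.map Complex.ofRealHom).transpose).submatrix f id =
      Matrix.diagonal (fun i => z (f i)) *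
        (Complex.ofRealHom.mapMatrix (A.submatrix id f)).transpose := by
    ext a b
    simp [Matrix.diagonal_mul]
  rw [e1, e2, Matrix.det_mul, Matrix.det_transpose, Matrix.det_diagonal, ← RingHom.map_det]
  simp
  ring

theorem inj_of_det {r : ℕ} {E : Type*} (A : Matrix (Fin r) E ℝ) (f : Fin r → E)
    (h : (A.submatrix id f).det ≠ 0) : Function.Injective f := by
  intro a b hab
  by_contra hne
  exact h (Matrix.det_zero_of_column_eq hne (fun i => by simp [hab]))

theorem card_aux {r : ℕ} {E : Type*} [Fintype E] (A : Matrix (Fin r) E ℝ) (P : Finset E → Prop) :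
    (Finset.univ.filter fun f : Fin r → E =>
      (A.submatrix id f).det ≠ 0 ∧ P (Finset.univ.image f)).card =
    r.factorial * (Finset.univ.filter fun B : Finset E => IsColBasis A B ∧ P B).card := by
  rw [Finset.card_eq_sum_card_fiberwise (f := fun f : Fin r → E => Finset.univ.image f)
    (t := Finset.univ.filter fun B : Finset E => IsColBasis A B ∧ P B), Finset.sum_const_nat, mul_comm]
  · intro B hB
    simp only [Finset.mem_filter, Finset.mem_univ, true_and] at hB
    obtain ⟨⟨g₀, hg₀⟩, hP⟩ := hB
    have hc : Fintype.card (Fin r ≃ B) = r.factorial := by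
      rw [Fintype.card_equiv g₀, Fintype.card_fin]
    rw [← hc, ← Finset.card_univ]
    symm
    have him : ∀ g : Fin r ≃ B, Finset.univ.image (fun i => ((g i : B) : E)) = B := by
      intro g
      ext e
      simp only [Finset.mem_image, Finset.mem_univ, true_and]
      constructor
      · rintro ⟨i, rfl⟩; exact (g i).2
      · intro he; exact ⟨g.symm ⟨e, he⟩, by simp⟩
    refine Finset.card_bij (fun g _ => fun i => ((g i : B) : E)) ?_ ?_ ?_
    · intro g _
      simp only [Finset.mem_filter, Finset.mem_univ, true_and]
      refine ⟨⟨?_, by rw [him]; exact hP⟩, him g⟩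
      have : A.submatrix id (fun i => ((g i : B) : E)) =
          (A.submatrix id (fun i => ((g₀ i : B) : E))).submatrix id (g.trans g₀.symm) := by
        ext a b; simp
      rw [this, Matrix.det_permute']
      refine mul_ne_zero ?_ hg₀
      exact_mod_cast (Equiv.Perm.sign (g.trans g₀.symm)).ne_zero
    · intro g _ g' _ h
      ext i
      exact congrFun h i
    · intro f hf
      simp only [Finset.mem_filter, Finset.mem_univ, true_and] at hf
      obtain ⟨⟨hd, _⟩, hB⟩ := hf
      have hi := inj_of_det A f hd
      have hm : ∀ i, f i ∈ B := fun i => by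
        rw [← hB]; exact Finset.mem_image_of_mem f (Finset.mem_univ i)
      refine ⟨Equiv.ofBijective (fun i => (⟨f i, hm i⟩ : B)) ⟨?_, ?_⟩, Finset.mem_univ _, rfl⟩
      · intro a b h
        exact hi (by simpa using h)
      · rintro ⟨e, he⟩
        rw [← hB] at he
        obtain ⟨i, _, hi⟩ := Finset.mem_image.1 he
        exact ⟨i, Subtype.ext hi⟩
  · intro f hf
    simp only [Finset.coe_filter, Finset.mem_univ, true_and, Set.mem_ofPred_eq] at hf ⊢
    refine ⟨⟨Equiv.ofBijective (fun i => (⟨f i, Finset.mem_image_of_mem f (Finset.mem_univ i)⟩ :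
      Finset.univ.image f)) ⟨?_, ?_⟩, hf.1⟩, hf.2⟩
    · intro a b h
      exact inj_of_det A f hf.1 (by simpa using h)
    · rintro ⟨e, he⟩
      obtain ⟨i, _, hi⟩ := Finset.mem_image.1 he
      exact ⟨i, Subtype.ext hi⟩

end Mat

section Main

open Polynomial Filter Topology

/-- The class of an element of the ground set. -/
def cls {E : Type*} {k : ℕ} (S : Finset E) (D : Fin k → Finset E) (e : E) :
    Option (Option (Fin k)) :=
  if e ∈ S then none else if h : ∃ i, e ∈ D i then some (some h.choose) else some none

theorem cls_none {E : Type*} {k : ℕ} (S : Finset E) (D : Fin k → Finset E) (e : E) :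
    cls S D e = none ↔ e ∈ S := by
  unfold cls
  split_ifs <;> simp_all

theorem cls_some {E : Type*} {k : ℕ} (S : Finset E) (D : Fin k → Finset E)
    (hSD : ∀ i, Disjoint S (D i)) (hDD : ∀ i j : Fin k, i ≠ j → Disjoint (D i) (D j))
    (e : E) (i : Fin k) : cls S D e = some (some i) ↔ e ∈ D i := by
  unfold cls
  split_ifs with h1 h2
  · simp only [reduceCtorEq, false_iff]
    exact Finset.disjoint_left.1 (hSD i) h1
  · simp only [Option.some.injEq]
    have h3 := h2.choose_spec
    constructor
    · intro h; rwa [h] at h3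
    · intro h
      by_contra hne
      exact Finset.disjoint_left.1 (hDD _ _ hne) h3 h
  · simp only [Option.some.injEq, reduceCtorEq, false_iff]
    exact fun h => h2 ⟨i, h⟩

/-- The number of indices mapped into a class. -/
def cnt {r : ℕ} {E V : Type*} (κ : E → V) (f : Fin r → E) (v : V) : ℕ :=
  (Finset.univ.filter fun i => κ (f i) = v).card

theorem cnt_eq {r : ℕ} {E V : Type*} (κ : E → V) (f : Fin r → E) (v : V)
    (hf : Function.Injective f) (U : Finset E) (hU : ∀ e, κ e = v ↔ e ∈ U) :
    cnt κ f v = (Finset.univ.image f ∩ U).card := by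
  unfold cnt
  rw [← Finset.card_image_of_injective _ hf]
  congr 1
  ext e
  simp only [Finset.mem_image, Finset.mem_filter, Finset.mem_univ, true_and, Finset.mem_inter, hU]
  constructor
  · rintro ⟨i, h, rfl⟩; exact ⟨⟨i, rfl⟩, h⟩
  · rintro ⟨⟨i, rfl⟩, h⟩; exact ⟨i, h, rfl⟩

theorem prod_cnt {r : ℕ} {E V : Type*} [Fintype V] (κ : E → V) (f : Fin r → E) (z : V → ℂ) :
    ∏ i, z (κ (f i)) = ∏ v, z v ^ cnt κ f v := by
  rw [← Finset.prod_fiberwise Finset.univ (fun i => κ (f i)) (fun i => z (κ (f i)))]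
  refine Finset.prod_congr rfl fun v _ => ?_
  unfold cnt
  rw [← Finset.prod_const]
  refine Finset.prod_congr rfl fun i hi => ?_
  rw [(Finset.mem_filter.1 hi).2]

/-- The limiting generating polynomial. -/
def genPoly {r : ℕ} {E : Type*} [Fintype E] (A : Matrix (Fin r) E ℝ) {k : ℕ}
    (κ : E → Option (Option (Fin k))) (c : Fin k → ℕ) : ℝ[X] :=
  ∑ f : Fin r → E, C ((A.submatrix id f).det ^ 2 *
    ∏ i, if cnt κ f (some (some i)) = c i then ((c i).factorial : ℝ) else 0) * X ^ cnt κ f none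

theorem genPoly_splits {r : ℕ} {E : Type*} [Fintype E] (A : Matrix (Fin r) E ℝ)
    (hrank : A.rank = r) {k : ℕ} (κ : E → Option (Option (Fin k))) (c : Fin k → ℕ) :
    (genPoly A κ c).Splits := by
  refine splits_of_limit r (fun ε => ∑ f : Fin r → E, C ((((A.submatrix id f).det ^ 2 : ℝ) : ℂ) *
    ((1 + (ε : ℂ) * Complex.I) ^ cnt κ f (some none) *
    ∏ i, fnl ((ε : ℂ) * Complex.I) (c i) (X ^ cnt κ f (some (some i))))) * X ^ cnt κ f none)
    ?_ ?_ ?_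
  · intro ε hε s hs
    have H := multi (fun f : Fin r → E => (((A.submatrix id f).det ^ 2 : ℝ) : ℂ))
      (fun f v => cnt κ f v) (by
        intro z hz
        have := sum_ne_zero_aux A hrank (fun e => z (κ e)) (fun e => hz _)
        simpa only [prod_cnt] using this)
      (fun v => match v with
        | none => leval s
        | some none => leval (1 + (ε : ℂ) * Complex.I)
        | some (some i) => fnl ((ε : ℂ) * Complex.I) (c i)) (by
        intro v
        match v with
        | none => exact fun p hp => hp s hs
        | some none => exact fun p hp => hp _ (by simpa using hε)
        | some (some i) => exact fnl_good hε (c i))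
    simp only [Fintype.prod_option, leval_apply, eval_pow, eval_X] at H
    rw [eval_finsetSum]
    simp only [eval_mul, eval_C, eval_pow, eval_X]
    convert H using 2
    ring
  · intro ε _
    refine natDegree_sum_le_of_forall_le _ _ fun f _ => ?_
    refine (natDegree_C_mul_X_pow_le _ _).trans ?_
    unfold cnt
    exact (Finset.card_le_univ _).trans (by simp)
  · intro z
    have e : (map Complex.ofRealHom (genPoly A κ c)).eval z =
        ∑ f : Fin r → E, ((((A.submatrix id f).det ^ 2 : ℝ) : ℂ) *
          ((1 + ((0 : ℝ) : ℂ) * Complex.I) ^ cnt κ f (some none) *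
          ∏ i, fnl (((0 : ℝ) : ℂ) * Complex.I) (c i) (X ^ cnt κ f (some (some i))))) *
          z ^ cnt κ f none := by
      unfold genPoly
      rw [Polynomial.map_sum, eval_finsetSum]
      refine Finset.sum_congr rfl fun f _ => ?_
      simp only [Complex.ofReal_zero, zero_mul, fnl_zero_X_pow]
      rw [Polynomial.map_mul, map_C, Polynomial.map_pow, map_X, eval_mul, eval_C, eval_pow, eval_X,
        map_mul, map_prod, add_zero, one_pow, one_mul]
      congr 2
      refine Finset.prod_congr rfl fun i _ => ?_
      split_ifs <;> simp
    rw [e]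
    simp only [eval_finsetSum, eval_mul, eval_C, eval_pow, eval_X]
    have hc : Continuous fun ε : ℝ => ∑ f : Fin r → E, ((((A.submatrix id f).det ^ 2 : ℝ) : ℂ) *
          ((1 + (ε : ℂ) * Complex.I) ^ cnt κ f (some none) *
          ∏ i, fnl ((ε : ℂ) * Complex.I) (c i) (X ^ cnt κ f (some (some i))))) *
          z ^ cnt κ f none := by
      have hI : Continuous fun ε : ℝ => (ε : ℂ) * Complex.I := by fun_prop
      refine continuous_finsetSum _ fun f _ => ?_
      refine (continuous_const.mul (((continuous_const.add hI).pow _).mul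
        (continuous_finsetProd _ fun i _ => ?_))).mul continuous_const
      exact (fnl_cont (c i) (X ^ cnt κ f (some (some i)))).comp hI
    exact (hc.tendsto 0).mono_left nhdsWithin_le_nhds

theorem genPoly_coeff {r : ℕ} {E : Type*} [Fintype E] (A : Matrix (Fin r) E ℝ)
    (hTU : A.IsTotallyUnimodular) {k : ℕ} (S : Finset E) (D : Fin k → Finset E)
    (hSD : ∀ i, Disjoint S (D i)) (hDD : ∀ i j : Fin k, i ≠ j → Disjoint (D i) (D j))
    (c : Fin k → ℕ) (j : ℕ) :
    (genPoly A (cls S D) c).coeff j =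
      ((∏ i, ((c i).factorial : ℝ)) * r.factorial) * (basisCount A S D c j : ℝ) := by
  have hcard := card_aux A (fun B => (B ∩ S).card = j ∧ ∀ i, (B ∩ D i).card = c i)
  have hb : basisCount A S D c j = (Finset.univ.filter fun B : Finset E => IsColBasis A B ∧
      (B ∩ S).card = j ∧ ∀ i, (B ∩ D i).card = c i).card := by
    unfold basisCount
    rw [Nat.card_eq_fintype_card, Fintype.card_subtype]
  have hcard' : ((Finset.univ.filter fun f : Fin r → E => (A.submatrix id f).det ≠ 0 ∧
      (Finset.univ.image f ∩ S).card = j ∧ ∀ i, (Finset.univ.image f ∩ D i).card = c i).card : ℝ)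
      = r.factorial * (basisCount A S D c j : ℝ) := by
    rw [hb, ← Nat.cast_mul]
    congr 1
    convert hcard
  rw [mul_assoc, ← hcard']
  unfold genPoly
  rw [finsetSum_coeff, Finset.card_filter]
  push_cast
  rw [Finset.mul_sum]
  refine Finset.sum_congr rfl fun f _ => ?_
  rw [coeff_C_mul, coeff_X_pow]
  by_cases hd : (A.submatrix id f).det = 0
  · simp [hd]
  have hi := inj_of_det A f hd
  rw [cnt_eq (cls S D) f none hi S (cls_none S D)]
  simp only [fun i => cnt_eq (cls S D) f (some (some i)) hi (D i)
    (fun e => cls_some S D hSD hDD e i)]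
  have hsq : (A.submatrix id f).det ^ 2 = 1 := by
    rw [Matrix.isTotallyUnimodular_iff] at hTU
    obtain ⟨s, hs⟩ := hTU r id f
    rw [← hs] at hd ⊢
    clear hs hcard hcard' hb
    cases s <;> simp at hd ⊢
  rw [hsq, one_mul]
  by_cases hall : ∀ i, (Finset.univ.image f ∩ D i).card = c i
  · by_cases hj : (Finset.univ.image f ∩ S).card = j
    · simp [hall, hj, hd]
    · rw [if_neg (fun h => hj h.symm), if_neg (fun h => hj h.2.1)]; simp
  · obtain ⟨i, hi⟩ := not_forall.1 hall
    rw [Finset.prod_eq_zero (Finset.mem_univ i) (if_neg hi), zero_mul]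
    simp [hall]

theorem final {r : ℕ} {E : Type*} [Fintype E] (A : Matrix (Fin r) E ℝ) (hrank : A.rank = r)
    (hTU : A.IsTotallyUnimodular) {k : ℕ} (S : Finset E) (D : Fin k → Finset E)
    (hSD : ∀ i, Disjoint S (D i)) (hDD : ∀ i j : Fin k, i ≠ j → Disjoint (D i) (D j))
    (c : Fin k → ℕ) (j : ℕ) (hj1 : 1 ≤ j) (hj2 : j + 1 ≤ S.card) :
    ((basisCount A S D c (j - 1) : ℝ) / (S.card.choose (j - 1) : ℝ)) *
        ((basisCount A S D c (j + 1) : ℝ) / (S.card.choose (j + 1) : ℝ)) ≤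
    ((basisCount A S D c j : ℝ) / (S.card.choose j : ℝ)) ^ 2 := by
  have hco := genPoly_coeff A hTU S D hSD hDD c
  have hK : (0 : ℝ) < (∏ i, ((c i).factorial : ℝ)) * r.factorial := by
    have : ∀ n : ℕ, (0 : ℝ) < n.factorial := fun n => by exact_mod_cast n.factorial_pos
    exact mul_pos (Finset.prod_pos fun i _ => this _) (this _)
  have hdeg : (genPoly A (cls S D) c).natDegree ≤ S.card := by
    rw [natDegree_le_iff_coeff_eq_zero]
    intro N hN
    rw [hco]
    have : basisCount A S D c N = 0 := by
      unfold basisCount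
      rw [Nat.card_eq_zero]
      left
      refine ⟨fun B => ?_⟩
      have h1 := B.2.2.1
      have h2 := Finset.card_le_card (Finset.inter_subset_right (s₁ := B.1) (s₂ := S))
      omega
    rw [this]; simp
  have := newton (genPoly_splits A hrank (cls S D) c) hdeg hj1 hj2
  rw [hco, hco, hco] at this
  generalize (∏ i, ((c i).factorial : ℝ)) * r.factorial = K at hK this
  rw [mul_div_assoc, mul_div_assoc, mul_div_assoc] at this
  refine le_of_mul_le_mul_left ?_ (mul_pos hK hK)
  refine le_trans (le_of_eq ?_) (this.trans (le_of_eq ?_)) <;> ring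

end Main

end StanleyAux

/-- Stanley's theorem (1981): for a regular matroid, represented as the column matroid of a
totally unimodular real matrix `A` of full row rank `r`, a partition
`π = (S, T, C_1, …, C_k)` of the ground set into pairwise disjoint nonempty parts, and
nonnegative integers `c_1, …, c_k`, the numbers `M_j(π)` satisfy
`M_j(π)²/C(|S|,j)² ≥ (M_{j-1}(π)/C(|S|,j-1))·(M_{j+1}(π)/C(|S|,j+1))` for `1 ≤ j ≤ |S|-1`. -/
theorem stanley_regular_matroid_logconcave {r : ℕ} {E : Type*} [Fintype E]
    (A : Matrix (Fin r) E ℝ) (hrank : A.rank = r) (hTU : A.IsTotallyUnimodular)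
    (k : ℕ) (S T : Finset E) (C : Fin k → Finset E) (c : Fin k → ℕ)
    (hS : S.Nonempty) (hT : T.Nonempty) (hC : ∀ i, (C i).Nonempty)
    (hST : Disjoint S T) (hSC : ∀ i, Disjoint S (C i)) (hTC : ∀ i, Disjoint T (C i))
    (hCC : ∀ i j : Fin k, i ≠ j → Disjoint (C i) (C j))
    (hcover : S ∪ T ∪ Finset.univ.biUnion C = Finset.univ)
    (j : ℕ) (hj1 : 1 ≤ j) (hj2 : j + 1 ≤ S.card) :
    ((basisCount A S C c j : ℝ) / (S.card.choose j : ℝ)) ^ 2 ≥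
      ((basisCount A S C c (j - 1) : ℝ) / (S.card.choose (j - 1) : ℝ)) *
        ((basisCount A S C c (j + 1) : ℝ) / (S.card.choose (j + 1) : ℝ)) := by
  exact StanleyAux.final A hrank hTU S C hSC hCC c j hj1 hj2
end
end

section
/- Let A be a complex r×E matrix of full row rank r (columns indexed by the finite set E) such that every nonzero minor of A (determinant of a square submatrix of any size) is a sixth root of unity, and let M be the matroid on E whose bases are the r-element subsets S ⊆ E such that det A[S] ≠ 0, where A[S] is the square submatrix of A on the columns S. Then M has the half-plane property: for every y : E → ℂ with Re(y_e) > 0 for all e ∈ E, the sum ∑_{B basis of M} ∏_{e∈B} y_e is nonzero. -/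
open scoped BigOperators
open Classical

noncomputable section

theorem det_mul_expand {r : ℕ} {E : Type*} [Fintype E]
    (M : Matrix (Fin r) E ℂ) (N : Matrix E (Fin r) ℂ) :
    (M * N).det = ∑ p : Fin r → E, (M.submatrix id p).det * ∏ i, N (p i) i := by
  have h1 : (M * N).det = ∑ σ : Equiv.Perm (Fin r), ∑ p : Fin r → E,
      ((Equiv.Perm.sign σ : ℤ) : ℂ) * ∏ i, (M (σ i) (p i) * N (p i) i) := by
    rw [Matrix.det_apply']
    refine Finset.sum_congr rfl fun σ _ => ?_
    simp only [Matrix.mul_apply]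
    rw [Finset.prod_univ_sum, Finset.mul_sum, Fintype.piFinset_univ]
  rw [h1, Finset.sum_comm]
  refine Finset.sum_congr rfl fun p _ => ?_
  rw [Matrix.det_apply', Finset.sum_mul]
  refine Finset.sum_congr rfl fun σ _ => ?_
  rw [Finset.prod_mul_distrib]
  simp [mul_assoc]

theorem inj_of_det {r : ℕ} {E : Type*} (M : Matrix (Fin r) E ℂ) (p : Fin r → E)
    (h : (M.submatrix id p).det ≠ 0) : Function.Injective p := by
  intro i j hij
  by_contra hne
  apply h
  refine Matrix.det_zero_of_column_eq hne fun k => ?_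
  simp [hij]

theorem fiber_sum {r : ℕ} {E : Type*} [Fintype E]
    (M : Matrix (Fin r) E ℂ) (N : Matrix E (Fin r) ℂ) (B : Finset E)
    (g : Fin r ≃ ↥B) :
    ∑ p : Fin r → E with Finset.univ.image p = B,
      (M.submatrix id p).det * ∏ i, N (p i) i
    = (M.submatrix id (fun i => (g i : E))).det *
      (N.submatrix (fun i => (g i : E)) id).det := by
  rw [Matrix.det_apply' (N.submatrix _ _), Finset.mul_sum]
  symm
  refine Finset.sum_bij (fun σ _ => fun i => (g (σ i) : E)) ?_ ?_ ?_ ?_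
  · intro σ _
    simp only [Finset.mem_filter, Finset.mem_univ, true_and]
    ext e
    simp only [Finset.mem_image, Finset.mem_univ, true_and]
    constructor
    · rintro ⟨i, rfl⟩
      exact (g (σ i)).2
    · intro he
      exact ⟨σ.symm (g.symm ⟨e, he⟩), by simp⟩
  · intro σ _ τ _ h
    ext i
    have := congrFun h i
    have := g.injective (Subtype.ext this)
    rw [this]
  · intro p hp
    simp only [Finset.mem_filter, Finset.mem_univ, true_and] at hp
    have hmem : ∀ i, p i ∈ B := fun i => by
      rw [← hp]; exact Finset.mem_image_of_mem _ (Finset.mem_univ _)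
    have hsurj : Function.Surjective (fun i => g.symm ⟨p i, hmem i⟩) := by
      intro j
      have : (g j : E) ∈ Finset.univ.image p := by rw [hp]; exact (g j).2
      obtain ⟨i, _, hi⟩ := Finset.mem_image.1 this
      refine ⟨i, ?_⟩
      simp [hi]
    refine ⟨Equiv.ofBijective _ (Finite.surjective_iff_bijective.1 hsurj), Finset.mem_univ _, ?_⟩
    funext i
    simp
  · intro σ _
    have := Matrix.det_permute' σ (M.submatrix id (fun i => (g i : E)))
    rw [Matrix.submatrix_submatrix] at this
    change _ = (M.submatrix id (fun i => (g (σ i) : E))).det * _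
    have h2 : (M.submatrix id (fun i => (g (σ i) : E))).det = _ := this
    rw [h2]
    simp only [Matrix.submatrix_apply, id]
    ring

theorem det_eq_basis_sum {r : ℕ} {E : Type*} [Fintype E]
    (A : Matrix (Fin r) E ℂ)
    (hsixth : ∀ (n : ℕ) (f : Fin n → Fin r) (g : Fin n → E),
      Function.Injective f → Function.Injective g →
      (A.submatrix f g).det ≠ 0 → (A.submatrix f g).det ^ 6 = 1)
    (y : E → ℂ) :
    (A * (Matrix.diagonal y * A.conjTranspose)).det =
      ∑ B : Finset E, if IsColBasis A B then ∏ e ∈ B, y e else 0 := by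
  rw [det_mul_expand, ← Finset.sum_fiberwise Finset.univ (fun p : Fin r → E => Finset.univ.image p)]
  refine Finset.sum_congr rfl fun B _ => ?_
  split_ifs with hB
  · obtain ⟨g, hg⟩ := hB
    rw [fiber_sum _ _ B g]
    have e1 : (Matrix.diagonal y * A.conjTranspose).submatrix (fun i => (g i : E)) id
        = Matrix.diagonal (fun i => y (g i)) *
          (A.submatrix id (fun i => (g i : E))).conjTranspose := by
      ext i j
      simp [Matrix.diagonal_mul]
    rw [e1, Matrix.det_mul, Matrix.det_diagonal, Matrix.det_conjTranspose]
    have h6 := hsixth r id _ Function.injective_id (inj_of_det _ _ hg) hg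
    have hn : ‖(A.submatrix id (fun i => (g i : E))).det‖ = 1 :=
      Complex.norm_eq_one_of_pow_eq_one h6 (by norm_num)
    have hp : ∏ i, y (g i) = ∏ e ∈ B, y e := by
      rw [Equiv.prod_comp g (fun e : ↥B => y e), Finset.prod_coe_sort]
    rw [hp, mul_left_comm]
    have := Complex.mul_conj' (A.submatrix id (fun i => (g i : E))).det
    rw [hn] at this
    simp only [Complex.star_def]
    rw [this]
    simp
  · refine Finset.sum_eq_zero fun p hp => ?_
    simp only [Finset.mem_filter, Finset.mem_univ, true_and] at hp
    by_cases hd : (A.submatrix id p).det = 0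
    · rw [hd, zero_mul]
    · exfalso
      have hinj := inj_of_det _ _ hd
      have hmem : ∀ i, p i ∈ B := fun i => by
        rw [← hp]; exact Finset.mem_image_of_mem _ (Finset.mem_univ _)
      apply hB
      refine ⟨Equiv.ofBijective (fun i => (⟨p i, hmem i⟩ : ↥B)) ⟨?_, ?_⟩, hd⟩
      · intro i j h
        exact hinj (congrArg Subtype.val h)
      · rintro ⟨e, he⟩
        rw [← hp] at he
        obtain ⟨i, _, hi⟩ := Finset.mem_image.1 he
        exact ⟨i, Subtype.ext hi⟩

/-- Every sixth-root of unity matroid has the half-plane property: if `A` is a complex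
`r × E` matrix of full row rank `r` all of whose nonzero minors are sixth roots of unity,
then the basis-generating polynomial of the column matroid of `A` is nonvanishing whenever
every variable has strictly positive real part. -/
theorem sixth_root_matroid_hpp {r : ℕ} {E : Type*} [Fintype E]
    (A : Matrix (Fin r) E ℂ) (hrank : A.rank = r)
    (hsixth : ∀ (n : ℕ) (f : Fin n → Fin r) (g : Fin n → E),
      Function.Injective f → Function.Injective g →
      (A.submatrix f g).det ≠ 0 → (A.submatrix f g).det ^ 6 = 1)
    (y : E → ℂ) (hy : ∀ e, 0 < (y e).re) :
    (∑ B : Finset E, if IsColBasis A B then ∏ e ∈ B, y e else 0) ≠ 0 := by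
  rw [← det_eq_basis_sum A hsixth y]
  intro h0
  obtain ⟨v, hv, hv0⟩ := Matrix.exists_mulVec_eq_zero_iff.2 h0
  set w := A.conjTranspose.mulVec v with hw
  have hwne : w ≠ 0 := by
    intro hw0
    have hr : A.conjTranspose.rank = r := by
      open scoped ComplexOrder in rw [Matrix.rank_conjTranspose, hrank]
    have hli : LinearIndependent ℂ A.conjTranspose.col := by
      rw [linearIndependent_iff_card_eq_finrank_span, Set.finrank,
        ← Matrix.rank_eq_finrank_span_cols, hr, Fintype.card_fin]
    have hin := Matrix.mulVec_injective_iff.2 hli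
    exact hv (hin (by rw [Matrix.mulVec_zero, ← hw, hw0]))
  have hq : ∑ e, y e * ((‖w e‖ ^ 2 : ℝ) : ℂ) = 0 := by
    have h1 : star v ⬝ᵥ ((A * (Matrix.diagonal y * A.conjTranspose)).mulVec v) = 0 := by
      rw [hv0, dotProduct_zero]
    rw [← Matrix.mulVec_mulVec, ← Matrix.mulVec_mulVec, ← hw, Matrix.dotProduct_mulVec] at h1
    have h2 : Matrix.vecMul (star v) A = star w := by
      rw [hw, Matrix.star_mulVec, Matrix.conjTranspose_conjTranspose]
    rw [h2] at h1
    rw [← h1, dotProduct]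
    refine Finset.sum_congr rfl fun e _ => ?_
    rw [Matrix.mulVec_diagonal]
    have := Complex.conj_mul' (w e)
    simp only [Pi.star_apply, Complex.star_def]
    rw [mul_left_comm, this]
    push_cast
    rfl
  have hre := congrArg Complex.re hq
  rw [Complex.re_sum] at hre
  simp only [Complex.re_mul_ofReal, Complex.zero_re] at hre
  obtain ⟨e, he⟩ := Function.ne_iff.1 hwne
  have hpos : 0 < ∑ e, (y e).re * ‖w e‖ ^ 2 := by
    refine Finset.sum_pos' (fun i _ => mul_nonneg (hy i).le (sq_nonneg _))
      ⟨e, Finset.mem_univ _, mul_pos (hy e) (pow_pos (norm_pos_iff.2 he) 2)⟩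
  linarith
end
end

section
/- Let P be a polynomial in the complex variables y = {y_e : e ∈ E}, let e ∈ E, and let n be the degree of P in the variable y_e. Write P = ∑_{j=0}^{n} P_j(y∖{y_e}) · y_e^j, and let Q := ∑_{j=0}^{n} P_j(y∖{y_e}) · y_e^{n−j} be the polynomial obtained by reversing the coefficients with respect to y_e (so that Q(y) = y_e^n · P evaluated with y_e replaced by 1/y_e, for y_e ≠ 0). If P has the half-plane property then Q has the half-plane property. -/
open scoped BigOperators
open Classical

noncomputable section

/-- A multivariate complex polynomial has the half-plane property if it is nonvanishing
whenever every variable has strictly positive real part. -/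
def HPPpoly {E : Type*} (P : MvPolynomial E ℂ) : Prop :=
  ∀ y : E → ℂ, (∀ e, 0 < (y e).re) → MvPolynomial.eval y P ≠ 0

/-- Lemma 3.2: if `P` has the half-plane property, `n` is the degree of `P` in the
variable `y_e`, and `Q` is the reversal of `P` with respect to `y_e` (characterized by
`Q(y) = y_e^n · P(y with y_e ↦ 1/y_e)` for `y_e ≠ 0`), then `Q` has the half-plane
property. -/
theorem reversal_half_plane_property {E : Type*} [Fintype E]
    (P Q : MvPolynomial E ℂ) (e : E) (n : ℕ) (hn : P.degreeOf e = n)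
    (hQ : ∀ y : E → ℂ, y e ≠ 0 →
      MvPolynomial.eval y Q =
        (y e) ^ n * MvPolynomial.eval (Function.update y e (y e)⁻¹) P)
    (hP : HPPpoly P) : HPPpoly Q := by
  intro y hy
  have hne : y e ≠ 0 := by
    intro h
    have := hy e
    rw [h] at this
    simp at this
  rw [hQ y hne]
  refine mul_ne_zero (pow_ne_zero _ hne) (hP _ ?_)
  intro f
  by_cases hf : f = e
  · subst hf
    rw [Function.update_self, Complex.inv_re]
    exact div_pos (hy f) (Complex.normSq_pos.mpr hne)
  · rw [Function.update_of_ne hf]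
    exact hy f
end
end

section
/- Let P be a polynomial in the complex variables y = {y_e : e ∈ E} and let e ∈ E. If P has the half-plane property, then the partial derivative ∂P/∂y_e is either identically zero or has the half-plane property. -/
open scoped BigOperators
open Classical

noncomputable section

theorem hpp_eval_aeval {E : Type*} (P : MvPolynomial E ℂ) (f : E → Polynomial ℂ) (t : ℂ) :
    (MvPolynomial.aeval f P).eval t = MvPolynomial.eval (fun i => (f i).eval t) P := by
  induction P using MvPolynomial.induction_on with
  | C a => simp
  | add p q hp hq => simp [hp, hq]
  | mul_X p i hp => simp [hp]

theorem hpp_derivative_aeval {E : Type*} (P : MvPolynomial E ℂ) (e : E) (y : E → ℂ) :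
    (MvPolynomial.aeval (fun i => if i = e then Polynomial.X else Polynomial.C (y i)) P).derivative
      = MvPolynomial.aeval (fun i => if i = e then Polynomial.X else Polynomial.C (y i))
        (MvPolynomial.pderiv e P) := by
  induction P using MvPolynomial.induction_on with
  | C a => simp
  | add p q hp hq => simp only [map_add, hp, hq]
  | mul_X p i hp =>
    by_cases h : i = e
    · subst h
      simp [Derivation.leibniz, hp]
      ring
    · simp [Derivation.leibniz, hp, h, MvPolynomial.pderiv_X_of_ne h]
      ring

theorem hpp_re_nonneg {E : Type*} (P : MvPolynomial E ℂ) (e : E) (hP : HPPpoly P)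
    (y : E → ℂ) (hy : ∀ i, 0 < (y i).re) :
    0 ≤ (MvPolynomial.eval y (MvPolynomial.pderiv e P) / MvPolynomial.eval y P).re := by
  set f : E → Polynomial ℂ := fun i => if i = e then Polynomial.X else Polynomial.C (y i) with hf
  have hfe : ∀ t, (fun i => (f i).eval t) = Function.update y e t := by
    intro t
    funext i
    by_cases h : i = e
    · subst h; simp [hf]
    · simp [hf, h]
  have h1 : ∀ Q, (MvPolynomial.aeval f Q).eval (y e) = MvPolynomial.eval y Q := by
    intro Q
    rw [hpp_eval_aeval, hfe, Function.update_eq_self]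
  rw [← h1 P, ← h1 (MvPolynomial.pderiv e P), ← hpp_derivative_aeval]
  have hne : (MvPolynomial.aeval f P).eval (y e) ≠ 0 := by
    rw [h1]; exact hP y hy
  rw [(IsAlgClosed.splits (MvPolynomial.aeval f P)).eval_derivative_div_eval_of_ne_zero hne]
  rw [← Complex.reCLM_apply, map_multiset_sum]
  apply Multiset.sum_nonneg
  intro x hx
  simp only [Multiset.map_map, Multiset.mem_map, Function.comp] at hx
  obtain ⟨r, hr, rfl⟩ := hx
  have hroot : (MvPolynomial.aeval f P).eval r = 0 := (Polynomial.mem_roots'.1 hr).2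
  have hrr : r.re ≤ 0 := by
    by_contra! hc
    rw [hpp_eval_aeval, hfe] at hroot
    refine hP _ (fun i => ?_) hroot
    by_cases h : i = e
    · subst h; simpa using hc
    · simpa [h] using hy i
  have := hy e
  simp only [Complex.reCLM_apply, one_div, Complex.inv_re, Complex.sub_re]
  exact div_nonneg (by linarith) (Complex.normSq_nonneg _)

/-- Lemma 3.3 ([COSW], Proposition 2.8): if `P` has the half-plane property, then
`∂P/∂y_e` is identically zero or has the half-plane property. -/
theorem pderiv_half_plane_property {E : Type*} [Fintype E]
    (P : MvPolynomial E ℂ) (e : E) (hP : HPPpoly P) :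
    MvPolynomial.pderiv e P = 0 ∨ HPPpoly (MvPolynomial.pderiv e P) := by
  rw [or_iff_not_imp_right]
  intro hn
  unfold HPPpoly at hn
  push Not at hn
  obtain ⟨y, hy, h0⟩ := hn
  apply MvPolynomial.funext
  intro w
  rw [map_zero]
  set f : E → Polynomial ℂ :=
    fun i => Polynomial.C (y i) + Polynomial.X * Polynomial.C (w i - y i) with hf
  set q := MvPolynomial.aeval f P with hq
  set d := MvPolynomial.aeval f (MvPolynomial.pderiv e P) with hd
  have hf0 : (fun i => (f i).eval 0) = y := by funext i; simp [hf]
  have hf1 : (fun i => (f i).eval 1) = w := by funext i; simp [hf]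
  have hq0 : q.eval 0 ≠ 0 := by rw [hq, hpp_eval_aeval, hf0]; exact hP y hy
  have hd0 : d.eval 0 = 0 := by rw [hd, hpp_eval_aeval, hf0]; exact h0
  have hpos : ∀ᶠ t in nhds (0 : ℂ), ∀ i, 0 < ((f i).eval t).re := by
    rw [Filter.eventually_all]
    intro i
    have hc : Continuous fun t : ℂ => ((f i).eval t).re :=
      Complex.continuous_re.comp (f i).continuous
    apply hc.continuousAt.eventually_const_lt
    simpa [hf] using hy i
  have hre : ∀ᶠ t in nhds (0 : ℂ), 0 ≤ (d.eval t / q.eval t).re := by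
    filter_upwards [hpos] with t ht
    rw [hd, hq, hpp_eval_aeval, hpp_eval_aeval]
    exact hpp_re_nonneg P e hP _ ht
  have hqne : ∀ᶠ t in nhds (0 : ℂ), q.eval t ≠ 0 := by
    filter_upwards [hpos] with t ht
    rw [hq, hpp_eval_aeval]
    exact hP _ ht
  have han : AnalyticAt ℂ (fun t => d.eval t / q.eval t) 0 :=
    (AnalyticOnNhd.eval_polynomial d 0 (Set.mem_univ _)).div
      (AnalyticOnNhd.eval_polynomial q 0 (Set.mem_univ _)) hq0
  have hdz : ∀ᶠ t in nhds (0 : ℂ), d.eval t = 0 := by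
    rcases han.eventually_constant_or_nhds_le_map_nhds with hc | hc
    · filter_upwards [hc, hqne] with t ht hqt
      simpa [hd0, hqt] using ht
    · exfalso
      have h2 : ∀ᶠ z in nhds (0 : ℂ), 0 ≤ z.re := by
        have := hc (Filter.mem_map.2 hre : {z : ℂ | 0 ≤ z.re} ∈ _)
        simp only [hd0, zero_div] at this
        exact this
      obtain ⟨ε, hε, hb⟩ := Metric.eventually_nhds_iff.1 h2
      have := @hb (-(ε / 2 : ℝ) : ℂ) (by
        rw [dist_zero_right, norm_neg, Complex.norm_real, Real.norm_of_nonneg (by linarith)]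
        linarith)
      rw [Complex.neg_re, Complex.ofReal_re] at this
      linarith
  have hdd : d = 0 := by
    apply Polynomial.eq_zero_of_infinite_isRoot
    exact infinite_of_mem_nhds (0 : ℂ) hdz
  have := hpp_eval_aeval (MvPolynomial.pderiv e P) f 1
  rw [hf1, ← hd, hdd] at this
  simpa using this.symm
end
end

section
/- Let P be a polynomial in the complex variables y = {y_e : e ∈ E}, fix e ∈ E, and write P = ∑_{j=0}^{n} P_j({y_f : f ≠ e}) · y_e^j, where each P_j is a polynomial in the remaining variables. If P has the half-plane property, then for each 0 ≤ j ≤ n the coefficient polynomial P_j is either identically zero or has the half-plane property. -/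
open scoped BigOperators
open Classical

noncomputable section

lemma aux_growth (q : Polynomial ℂ) (m : ℕ) (r : ℝ) (hr : 0 < r) (hq : q.natDegree ≤ m)
    (h : ∀ s : ℂ, ‖s‖ < r → q.eval s ≠ 0) :
    ‖q.eval 1‖ ≤ (1 + 1 / r) ^ m * ‖q.eval 0‖ := by
  have hs := IsAlgClosed.splits q
  have key : ∀ M : Multiset ℂ, (∀ x ∈ M, r ≤ ‖x‖) →
      ‖(M.map (1 - ·)).prod‖ ≤ (1 + 1 / r) ^ M.card * ‖(M.map (0 - ·)).prod‖ := by
    intro M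
    induction M using Multiset.induction_on with
    | empty => intro _; simp
    | cons a M ih =>
      intro hM
      have h1 := ih (fun x hx => hM x (Multiset.mem_cons_of_mem hx))
      have h2 : r ≤ ‖a‖ := hM a (Multiset.mem_cons_self a M)
      have h3 : ‖1 - a‖ ≤ (1 + 1 / r) * ‖0 - a‖ := by
        have : ‖1 - a‖ ≤ 1 + ‖a‖ := by simpa using norm_sub_le (1 : ℂ) a
        have h4 : 1 ≤ 1 / r * ‖a‖ := by
          rw [one_div, ← div_eq_inv_mul, le_div_iff₀ hr]; linarith
        rw [zero_sub, norm_neg]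
        linarith
      simp only [Multiset.map_cons, Multiset.prod_cons, norm_mul, Multiset.card_cons]
      calc _ ≤ ((1 + 1 / r) * ‖0 - a‖) * ((1 + 1 / r) ^ M.card * ‖(M.map (0 - ·)).prod‖) := by
            gcongr
        _ = _ := by ring
  have hroots : ∀ x ∈ q.roots, r ≤ ‖x‖ := by
    intro x hx
    by_contra hlt
    exact h x (not_le.mp hlt) (Polynomial.isRoot_of_mem_roots hx)
  have h1 := key q.roots hroots
  have hcard : q.roots.card ≤ m := (Polynomial.card_roots' q).trans hq
  have h2 : (1 + 1 / r) ^ q.roots.card ≤ (1 + 1 / r) ^ m :=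
    pow_le_pow_right₀ (by have : 0 < 1 / r := by positivity
                          linarith) hcard
  rw [hs.eval_eq_prod_roots, hs.eval_eq_prod_roots, norm_mul, norm_mul]
  calc _ ≤ ‖q.leadingCoeff‖ * ((1 + 1 / r) ^ m * ‖(q.roots.map (0 - ·)).prod‖) := by
        gcongr
        exact h1.trans (by gcongr)
    _ = _ := by ring

lemma aux_bound {E : Type*} [Fintype E] (y w : E → ℂ) (hy : ∀ e, 0 < (y e).re) (m : ℕ) :
    ∃ C : ℝ, ∀ Q : MvPolynomial E ℂ, Q.totalDegree ≤ m → HPPpoly Q →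
      ‖MvPolynomial.eval w Q‖ ≤ C * ‖MvPolynomial.eval y Q‖ := by
  have hev : ∀ᶠ s in nhds (0 : ℂ), ∀ e, 0 < (y e + (w e - y e) * s).re := by
    rw [Filter.eventually_all]
    intro e
    have hc : Continuous (fun s : ℂ => (y e + (w e - y e) * s).re) := by fun_prop
    exact hc.continuousAt.eventually (lt_mem_nhds (by simpa using hy e))
  obtain ⟨r, hr, hball⟩ := Metric.eventually_nhds_iff.mp hev
  refine ⟨(1 + 1 / r) ^ m, fun Q hQ hH => ?_⟩
  set q : Polynomial ℂ := MvPolynomial.aeval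
    (fun e => Polynomial.C (w e - y e) * Polynomial.X + Polynomial.C (y e)) Q with hqdef
  have heval : ∀ s : ℂ, q.eval s = MvPolynomial.eval (fun e => y e + (w e - y e) * s) Q := by
    intro s
    rw [hqdef, ← Polynomial.coe_evalRingHom, MvPolynomial.aeval_def, MvPolynomial.hom_eval₂,
      MvPolynomial.eval, MvPolynomial.coe_eval₂Hom]
    congr 1
    · ext; simp
    · funext e; simp; ring
  have hdeg : q.natDegree ≤ m := by
    have := MvPolynomial.aeval_natDegree_le (n := 1) Q hQ
      (fun e => Polynomial.C (w e - y e) * Polynomial.X + Polynomial.C (y e))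
      (fun e => Polynomial.natDegree_linear_le)
    rw [mul_one] at this
    exact this
  have := aux_growth q m r hr hdeg (fun s hs => by
    rw [heval]; exact hH _ (hball (by simpa using hs)))
  rw [heval, heval] at this
  have e1 : (fun e => y e + (w e - y e) * 1) = w := by funext e; ring
  have e0 : (fun e => y e + (w e - y e) * 0) = y := by funext e; ring
  rw [e1, e0] at this
  exact this

lemma aux_limit {E : Type*} [Fintype E] (Q : ℕ → MvPolynomial E ℂ) (Q₀ : MvPolynomial E ℂ) (m : ℕ)
    (hd : ∀ k, (Q k).totalDegree ≤ m) (hH : ∀ k, HPPpoly (Q k))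
    (hl : ∀ y, Filter.Tendsto (fun k => MvPolynomial.eval y (Q k)) Filter.atTop
      (nhds (MvPolynomial.eval y Q₀))) : Q₀ = 0 ∨ HPPpoly Q₀ := by
  by_cases h : HPPpoly Q₀
  · exact Or.inr h
  left
  unfold HPPpoly at h
  push Not at h
  obtain ⟨y, hy, h0⟩ := h
  apply MvPolynomial.funext
  intro w
  obtain ⟨C, hC⟩ := aux_bound y w hy m
  have h1 := le_of_tendsto_of_tendsto' (hl w).norm ((hl y).norm.const_mul C)
    (fun k => hC (Q k) (hd k) (hH k))
  rw [h0] at h1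
  simpa using h1

lemma aux_deriv (q : Polynomial ℂ) (hq : ∀ z : ℂ, 0 < z.re → q.eval z ≠ 0) (t : ℝ) (ht : 0 < t)
    (z : ℂ) (hz : 0 < z.re) : (t : ℂ) * q.eval z + q.derivative.eval z ≠ 0 := by
  have h0 := hq z hz
  have hdiv := (IsAlgClosed.splits q).eval_derivative_div_eval_of_ne_zero h0
  have key : ∀ M : Multiset ℂ, (∀ x ∈ M, x.re ≤ 0) →
      0 ≤ ((M.map (fun x => 1 / (z - x))).sum).re := by
    intro M
    induction M using Multiset.induction_on with
    | empty => intro _; simp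
    | cons a M ih =>
      intro hM
      have h1 := ih (fun x hx => hM x (Multiset.mem_cons_of_mem hx))
      have h2 := hM a (Multiset.mem_cons_self a M)
      rw [Multiset.map_cons, Multiset.sum_cons, Complex.add_re]
      have h3 : 0 ≤ (1 / (z - a)).re := by
        rw [one_div, Complex.inv_re]
        apply div_nonneg _ (Complex.normSq_nonneg _)
        rw [Complex.sub_re]; linarith
      linarith
  have hk := key q.roots (fun x hx => by
    by_contra hlt
    exact hq x (not_le.mp hlt) (Polynomial.isRoot_of_mem_roots hx))
  rw [← hdiv] at hk
  intro hzero
  have : q.derivative.eval z / q.eval z = ((-t : ℝ) : ℂ) := by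
    rw [div_eq_iff h0]; push_cast; linear_combination hzero
  rw [this, Complex.ofReal_re] at hk
  linarith

lemma aux_eval_update {E : Type*} (Q : MvPolynomial E ℂ) (e : E) (h : Q.degreeOf e = 0)
    (y : E → ℂ) (z : ℂ) :
    MvPolynomial.eval (Function.update y e z) Q = MvPolynomial.eval y Q := by
  apply MvPolynomial.eval₂Hom_congr' rfl _ rfl
  intro i hi _
  have : i ≠ e := by
    rintro rfl
    exact MvPolynomial.mem_vars_iff_degreeOf_ne_zero.mp hi h
  simp [this]

lemma aux_eval_S {E : Type*} (p : Polynomial (MvPolynomial E ℂ)) (a : MvPolynomial E ℂ)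
    (y : E → ℂ) :
    MvPolynomial.eval y (p.eval a) =
      (p.map (MvPolynomial.eval y)).eval (MvPolynomial.eval y a) := by
  rw [Polynomial.eval_map, Polynomial.eval₂_at_apply]

lemma aux_map_update {E : Type*} (p : Polynomial (MvPolynomial E ℂ)) (e : E)
    (hp : ∀ j, (p.coeff j).degreeOf e = 0) (y : E → ℂ) (z : ℂ) :
    MvPolynomial.eval (Function.update y e z) (p.eval (MvPolynomial.X e)) =
      (p.map (MvPolynomial.eval y)).eval z := by
  rw [aux_eval_S]
  have : p.map (MvPolynomial.eval (Function.update y e z)) = p.map (MvPolynomial.eval y) := by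
    ext j
    simp [Polynomial.coeff_map, aux_eval_update _ e (hp j)]
  rw [this]
  simp

lemma aux_G {E : Type*} (p : Polynomial (MvPolynomial E ℂ)) (e : E)
    (hp : ∀ j, (p.coeff j).degreeOf e = 0) (hH : HPPpoly (p.eval (MvPolynomial.X e)))
    (y : E → ℂ) (hy : ∀ f, 0 < (y f).re) (z : ℂ) (hz : 0 < z.re) :
    (p.map (MvPolynomial.eval y)).eval z ≠ 0 := by
  rw [← aux_map_update p e hp]
  apply hH
  intro f
  by_cases h : f = e
  · subst h; simpa using hz
  · simpa [h] using hy f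

lemma aux_inj {E : Type*} (p : Polynomial (MvPolynomial E ℂ)) (e : E)
    (hp : ∀ j, (p.coeff j).degreeOf e = 0) (h0 : p.eval (MvPolynomial.X e) = 0) : p = 0 := by
  ext1 j
  apply MvPolynomial.funext
  intro y
  have : p.map (MvPolynomial.eval y) = 0 := by
    apply Polynomial.funext
    intro z
    rw [← aux_map_update p e hp, h0]
    simp
  have h2 := congrArg (fun q => Polynomial.coeff q j) this
  simpa using h2

lemma aux_tend : Filter.Tendsto (fun k : ℕ => (((1 : ℝ) / (k + 1) : ℝ) : ℂ)) Filter.atTop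
    (nhds 0) := by
  have := (Complex.continuous_ofReal.tendsto 0).comp
    (tendsto_one_div_add_atTop_nhds_zero_nat (𝕜 := ℝ))
  simpa [Function.comp_def] using this

lemma aux_step {E : Type*} [Fintype E] (p : Polynomial (MvPolynomial E ℂ)) (e : E)
    (hp : ∀ j, (p.coeff j).degreeOf e = 0)
    (hp' : ∀ j, (p.derivative.coeff j).degreeOf e = 0)
    (hH : HPPpoly (p.eval (MvPolynomial.X e))) :
    p.derivative = 0 ∨ HPPpoly (p.derivative.eval (MvPolynomial.X e)) := by
  refine Or.imp_left (aux_inj _ e hp') ?_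
  refine aux_limit
    (fun k => (((1 : ℝ) / (k + 1) : ℝ) : ℂ) • p.eval (MvPolynomial.X e)
      + p.derivative.eval (MvPolynomial.X e)) _
    (max (p.eval (MvPolynomial.X e)).totalDegree
      (p.derivative.eval (MvPolynomial.X e)).totalDegree) ?_ ?_ ?_
  · intro k
    refine (MvPolynomial.totalDegree_add _ _).trans ?_
    exact max_le_max (MvPolynomial.totalDegree_smul_le _ _) le_rfl
  · intro k y hy
    have := aux_deriv (p.map (MvPolynomial.eval y)) (aux_G p e hp hH y hy) (1 / (k + 1))
      (by positivity) (y e) (hy e)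
    rw [map_add, MvPolynomial.smul_eval, aux_eval_S, aux_eval_S, MvPolynomial.eval_X]
    rwa [Polynomial.derivative_map] at this
  · intro y
    have := (aux_tend.mul_const (MvPolynomial.eval y (p.eval (MvPolynomial.X e)))).add_const
      (MvPolynomial.eval y (p.derivative.eval (MvPolynomial.X e)))
    simpa [MvPolynomial.smul_eval] using this

lemma aux_zero {E : Type*} [Fintype E] (p : Polynomial (MvPolynomial E ℂ)) (e : E)
    (hp : ∀ j, (p.coeff j).degreeOf e = 0)
    (hH : HPPpoly (p.eval (MvPolynomial.X e))) :
    p.coeff 0 = 0 ∨ HPPpoly (p.coeff 0) := by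
  refine aux_limit
    (fun k => p.eval (MvPolynomial.C (((1 : ℝ) / (k + 1) : ℝ) : ℂ))) _
    ((Finset.range (p.natDegree + 1)).sup (fun i => (p.coeff i).totalDegree)) ?_ ?_ ?_
  · intro k
    rw [Polynomial.eval_eq_sum_range]
    refine MvPolynomial.totalDegree_finsetSum_le (fun i hi => ?_)
    refine le_trans ?_ (Finset.le_sup (f := fun i => (p.coeff i).totalDegree) hi)
    rw [← map_pow]
    refine (MvPolynomial.totalDegree_mul _ _).trans ?_
    simp
  · intro k y hy
    rw [aux_eval_S, MvPolynomial.eval_C]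
    apply aux_G p e hp hH y hy
    rw [Complex.ofReal_re]
    positivity
  · intro y
    have hc := ((p.map (MvPolynomial.eval y)).continuous.tendsto 0).comp aux_tend
    rw [← Polynomial.coeff_zero_eq_eval_zero, Polynomial.coeff_map] at hc
    simpa only [aux_eval_S, MvPolynomial.eval_C, Function.comp_def] using hc

lemma aux_iter {E : Type*} [Fintype E] (p : Polynomial (MvPolynomial E ℂ)) (e : E)
    (hp : ∀ j, (p.coeff j).degreeOf e = 0)
    (hH : HPPpoly (p.eval (MvPolynomial.X e))) (j : ℕ) :
    p.coeff j = 0 ∨ HPPpoly (p.coeff j) := by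
  have hfree : ∀ k i, ((Polynomial.derivative^[k] p).coeff i).degreeOf e = 0 := by
    intro k i
    rw [Polynomial.coeff_iterate_derivative, nsmul_eq_mul]
    have h1 := MvPolynomial.degreeOf_C_mul_le (p.coeff (i + k)) e
      (((i + k).descFactorial k : ℕ) : ℂ)
    rw [hp] at h1
    simpa using h1
  have hit : ∀ k, Polynomial.derivative^[k] p = 0 ∨
      HPPpoly ((Polynomial.derivative^[k] p).eval (MvPolynomial.X e)) := by
    intro k
    induction k with
    | zero => exact Or.inr hH
    | succ k ih =>
      have hk := hfree (k + 1)
      rw [Function.iterate_succ_apply'] at hk ⊢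
      rcases ih with h | h
      · left; rw [h]; simp
      · exact aux_step _ e (hfree k) hk h
  have hc : (Polynomial.derivative^[j] p).coeff 0 = (j.factorial : ℂ) • p.coeff j := by
    rw [Polynomial.coeff_iterate_derivative, zero_add, Nat.descFactorial_self, Nat.cast_smul_eq_nsmul]
  have hj : (j.factorial : ℂ) ≠ 0 := by exact_mod_cast j.factorial_ne_zero
  have h2 : (Polynomial.derivative^[j] p).coeff 0 = 0 ∨
      HPPpoly ((Polynomial.derivative^[j] p).coeff 0) := by
    rcases hit j with h | h
    · left; rw [h]; simp
    · exact aux_zero _ e (hfree j) h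
  rw [hc] at h2
  rcases h2 with h | h
  · left
    exact (smul_eq_zero.mp h).resolve_left hj
  · right
    intro y hy h0
    apply h y hy
    rw [MvPolynomial.smul_eval, h0, mul_zero]

/-- Corollary 3.4: write `P = ∑_{j=0}^n P_j · y_e^j` with each `P_j` not involving the
variable `y_e`.  If `P` has the half-plane property, then each `P_j` is identically zero
or has the half-plane property. -/
theorem coefficient_half_plane_property {E : Type*} [Fintype E]
    (P : MvPolynomial E ℂ) (e : E) (n : ℕ) (Pc : ℕ → MvPolynomial E ℂ)
    (hvars : ∀ j : ℕ, (Pc j).degreeOf e = 0)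
    (hdecomp : P = ∑ j ∈ Finset.range (n + 1), Pc j * (MvPolynomial.X e) ^ j)
    (hP : HPPpoly P) :
    ∀ j : ℕ, j ≤ n → Pc j = 0 ∨ HPPpoly (Pc j) := by
  intro j hj
  set p : Polynomial (MvPolynomial E ℂ) :=
    ∑ i ∈ Finset.range (n + 1), Polynomial.C (Pc i) * Polynomial.X ^ i with hpdef
  have hcoeff : ∀ i, p.coeff i = if i < n + 1 then Pc i else 0 := by
    intro i
    simp [hpdef, Polynomial.finset_sum_coeff, Polynomial.coeff_C_mul, Polynomial.coeff_X_pow]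
  have hfree : ∀ i, (p.coeff i).degreeOf e = 0 := by
    intro i
    rw [hcoeff]
    split_ifs
    · exact hvars i
    · simp
  have heval : p.eval (MvPolynomial.X e) = P := by
    rw [hdecomp, hpdef, Polynomial.eval_finset_sum]
    simp
  have h := aux_iter p e hfree (by rw [heval]; exact hP) j
  rwa [hcoeff, if_pos (by omega)] at h
end
end

section
/- Let P be a nonzero homogeneous polynomial in the complex variables y = {y_e : e ∈ E}. For families of nonnegative real numbers a = {a_e : e ∈ E} and b = {b_e : e ∈ E}, let P(ax + b) denote the univariate polynomial in x obtained by substituting y_e = a_e·x + b_e for each e ∈ E. Then the following are equivalent: (a) P has the half-plane property; (b) for all families of nonnegative real numbers a and b, the polynomial P(ax + b) is either identically zero or has only real nonpositive zeros (every complex root is a nonpositive real number). -/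
open scoped BigOperators
open Classical

noncomputable section

theorem aux_multiset (z z0 : ℂ) (ρ : ℝ) (hz : ‖z - z0‖ ≤ ρ) (s : Multiset ℂ) :
    (∀ w ∈ s, ρ ≤ ‖z0 - w‖) →
    ‖(s.map (z - ·)).prod‖ ≤ 2 ^ s.card * ‖(s.map (z0 - ·)).prod‖ := by
  induction s using Multiset.induction with
  | empty => intro _; simp
  | cons w s ih =>
    intro h
    have h1 := h w (Multiset.mem_cons_self w s)
    have h2 := ih (fun v hv => h v (Multiset.mem_cons_of_mem hv))
    simp only [Multiset.map_cons, Multiset.prod_cons, Multiset.card_cons, norm_mul]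
    have h3 : ‖z - w‖ ≤ 2 * ‖z0 - w‖ := by
      have : z - w = (z - z0) + (z0 - w) := by ring
      rw [this]
      linarith [norm_add_le (z - z0) (z0 - w)]
    calc _ ≤ (2 * ‖z0 - w‖) * (2 ^ s.card * ‖(s.map (z0 - ·)).prod‖) := by gcongr
      _ = _ := by ring

/-- A polynomial without zeros in a disc is controlled on the disc by its central value. -/
theorem aux_poly (g : Polynomial ℂ) (z z0 : ℂ) (ρ : ℝ) (hz : ‖z - z0‖ ≤ ρ)
    (hg : ∀ w, ‖w - z0‖ < ρ → g.eval w ≠ 0) (r : ℕ) (hr : g.natDegree ≤ r) :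
    ‖g.eval z‖ ≤ 2 ^ r * ‖g.eval z0‖ := by
  have hs := IsAlgClosed.splits g
  have h := aux_multiset z z0 ρ hz g.roots (by
    intro w hw
    by_contra hlt
    push Not at hlt
    rw [norm_sub_rev] at hlt
    exact hg w hlt (Polynomial.isRoot_of_mem_roots hw))
  rw [hs.eval_eq_prod_roots z, hs.eval_eq_prod_roots z0, norm_mul, norm_mul]
  have hc : g.roots.card ≤ r := (Polynomial.card_roots' g).trans hr
  have h2 : (2:ℝ) ^ g.roots.card ≤ 2 ^ r := pow_le_pow_right₀ (by norm_num) hc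
  calc _ ≤ ‖g.leadingCoeff‖ * (2 ^ r * ‖(g.roots.map (z0 - ·)).prod‖) := by
        gcongr
        exact h.trans (by gcongr)
    _ = _ := by ring

theorem aux_hom {E : Type*} (P : MvPolynomial E ℂ) (r : ℕ) (hhom : P.IsHomogeneous r)
    (c : ℂ) (y : E → ℂ) :
    MvPolynomial.eval (fun e => c * y e) P = c ^ r * MvPolynomial.eval y P := by
  rw [MvPolynomial.eval_eq, MvPolynomial.eval_eq, Finset.mul_sum]
  refine Finset.sum_congr rfl fun d hd => ?_
  have h := hhom (MvPolynomial.mem_support_iff.mp hd)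
  have hd' : ∑ i ∈ d.support, d i = r := by
    rw [← h, Finsupp.weight_apply, Finsupp.sum]
    simp
  simp only [mul_pow, Finset.prod_mul_distrib, Finset.prod_pow_eq_pow_sum, hd']
  ring

theorem aux_eval {E : Type*} (P : MvPolynomial E ℂ) (a b : E → ℝ) (z : ℂ) :
    (MvPolynomial.aeval (fun e => Polynomial.C ((a e : ℝ) : ℂ) * Polynomial.X +
      Polynomial.C ((b e : ℝ) : ℂ)) P).eval z
    = MvPolynomial.eval (fun e => (a e : ℂ) * z + (b e : ℂ)) P := by
  rw [← Polynomial.coe_aeval_eq_eval, ← MvPolynomial.coe_aeval_eq_eval]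
  have := MvPolynomial.comp_aeval (R := ℂ) (fun e => Polynomial.C ((a e : ℝ) : ℂ) * Polynomial.X +
      Polynomial.C ((b e : ℝ) : ℂ)) (Polynomial.aeval z)
  have h2 := DFunLike.congr_fun this P
  simp only [AlgHom.comp_apply] at h2
  rw [h2]
  simp

theorem aux_pos {E : Type*} (P : MvPolynomial E ℂ) (r : ℕ) (hhom : P.IsHomogeneous r)
    (h : HPPpoly P) (a b : E → ℝ) (ha : ∀ e, 0 < a e) (hb : ∀ e, 0 < b e) (z : ℂ)
    (hz : z ∈ Complex.slitPlane) :
    MvPolynomial.eval (fun e => (a e : ℂ) * z + (b e : ℂ)) P ≠ 0 := by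
  intro h0
  have hpos : 0 < ‖z‖ + z.re := by
    rcases Complex.mem_slitPlane_iff.mp hz with h | h
    · positivity
    · have := Complex.abs_re_lt_norm.mpr h
      linarith [neg_abs_le z.re]
  have hn : 0 < ‖z‖ := norm_pos_iff.mpr (Complex.slitPlane_ne_zero hz)
  refine h (fun e => ((‖z‖ : ℂ) + (starRingEnd ℂ) z) * ((a e : ℂ) * z + (b e : ℂ))) ?_ ?_
  · intro e
    have hsq : z.re * z.re + z.im * z.im = ‖z‖ * ‖z‖ := by
      rw [← Complex.normSq_apply, Complex.normSq_eq_norm_sq, sq]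
    have : (((‖z‖ : ℂ) + (starRingEnd ℂ) z) * ((a e : ℂ) * z + (b e : ℂ))).re
        = a e * (‖z‖ * (‖z‖ + z.re)) + b e * (‖z‖ + z.re) := by
      simp
      linear_combination a e * hsq
    rw [this]
    have := ha e
    have := hb e
    positivity
  · rw [aux_hom P r hhom, h0, mul_zero]

theorem aux_forward {E : Type*} (P : MvPolynomial E ℂ) (r : ℕ) (hhom : P.IsHomogeneous r)
    (h : HPPpoly P) (a b : E → ℝ) (ha : ∀ e, 0 ≤ a e) (hb : ∀ e, 0 ≤ b e)
    (z0 : ℂ) (hz0 : z0 ∈ Complex.slitPlane)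
    (h0 : MvPolynomial.eval (fun e => (a e : ℂ) * z0 + (b e : ℂ)) P = 0) :
    MvPolynomial.aeval (fun e => Polynomial.C ((a e : ℝ) : ℂ) * Polynomial.X +
      Polynomial.C ((b e : ℝ) : ℂ)) P = 0 := by
  obtain ⟨ρ, hρ, hball⟩ := Metric.isOpen_iff.mp Complex.isOpen_slitPlane z0 hz0
  have key : ∀ z ∈ Metric.ball z0 ρ,
      MvPolynomial.eval (fun e => (a e : ℂ) * z + (b e : ℂ)) P = 0 := by
    intro z hz
    have hz' : ‖z - z0‖ ≤ ρ := by
      rw [← dist_eq_norm]; exact (Metric.mem_ball.mp hz).le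
    have hle : ∀ ε : ℝ, 0 < ε →
        ‖MvPolynomial.eval (fun e => ((a e + ε : ℝ) : ℂ) * z + ((b e + ε : ℝ) : ℂ)) P‖ ≤
        2 ^ r * ‖MvPolynomial.eval (fun e => ((a e + ε : ℝ) : ℂ) * z0 + ((b e + ε : ℝ) : ℂ)) P‖ := by
      intro ε hε
      rw [← aux_eval P (fun e => a e + ε) (fun e => b e + ε),
        ← aux_eval P (fun e => a e + ε) (fun e => b e + ε)]
      refine aux_poly _ z z0 ρ hz' ?_ r ?_
      · intro w hw
        rw [aux_eval P (fun e => a e + ε) (fun e => b e + ε)]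
        refine aux_pos P r hhom h _ _ (fun e => ?_) (fun e => ?_) w (hball ?_)
        · have := ha e
          positivity
        · have := hb e
          positivity
        · rw [Metric.mem_ball, dist_eq_norm]; exact hw
      · have := MvPolynomial.aeval_natDegree_le (m := r) (n := 1) P hhom.totalDegree_le
          (fun e => Polynomial.C ((a e + ε : ℝ) : ℂ) * Polynomial.X +
            Polynomial.C ((b e + ε : ℝ) : ℂ)) (fun e => Polynomial.natDegree_linear_le)
        simpa using this
    have hcont : ∀ w : ℂ, Continuous (fun ε : ℝ =>
        ‖MvPolynomial.eval (fun e => ((a e + ε : ℝ) : ℂ) * w + ((b e + ε : ℝ) : ℂ)) P‖) := by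
      intro w
      refine ((MvPolynomial.continuous_eval P).comp ?_).norm
      fun_prop
    have hlim : ∀ w : ℂ, Filter.Tendsto (fun ε : ℝ =>
        ‖MvPolynomial.eval (fun e => ((a e + ε : ℝ) : ℂ) * w + ((b e + ε : ℝ) : ℂ)) P‖)
        (nhdsWithin 0 (Set.Ioi 0))
        (nhds ‖MvPolynomial.eval (fun e => (a e : ℂ) * w + (b e : ℂ)) P‖) := by
      intro w
      have := ((hcont w).tendsto 0).mono_left (nhdsWithin_le_nhds (s := Set.Ioi 0))
      simpa only [add_zero] using this
    have := le_of_tendsto_of_tendsto (hlim z) ((hlim z0).const_mul (2 ^ r))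
      (by filter_upwards [self_mem_nhdsWithin] with ε hε using hle ε hε)
    rw [h0, norm_zero, mul_zero] at this
    exact norm_le_zero_iff.mp this
  refine Polynomial.eq_zero_of_infinite_isRoot _ (Set.Infinite.mono (s := Metric.ball z0 ρ) ?_ ?_)
  · intro z hz
    change Polynomial.eval z _ = 0
    rw [aux_eval]
    exact key z hz
  · exact infinite_of_mem_nhds z0 (Metric.ball_mem_nhds z0 hρ)

theorem aux_backward {E : Type*} [Fintype E]
    (P : MvPolynomial E ℂ) (r : ℕ) (hP0 : P ≠ 0) (hhom : P.IsHomogeneous r)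
    (h : ∀ a b : E → ℝ, (∀ e, 0 ≤ a e) → (∀ e, 0 ≤ b e) → ∀ z ∈ Complex.slitPlane,
      MvPolynomial.eval (fun e => (a e : ℂ) * z + (b e : ℂ)) P = 0 →
      MvPolynomial.eval (fun e => (b e : ℂ)) P = 0) : HPPpoly P := by
  intro y hy h0
  -- choose a large slope
  obtain ⟨M, hM1, hM⟩ : ∃ M : ℝ, 0 < M ∧ ∀ e, |(y e).im| < M * (y e).re := by
    refine ⟨1 + ∑ e, |(y e).im| / (y e).re, ?_, fun e => ?_⟩
    · have : 0 ≤ ∑ e, |(y e).im| / (y e).re :=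
        Finset.sum_nonneg fun e _ => div_nonneg (abs_nonneg _) (hy e).le
      linarith
    · have : |(y e).im| / (y e).re ≤ ∑ e, |(y e).im| / (y e).re :=
        Finset.single_le_sum (f := fun e => |(y e).im| / (y e).re)
          (fun e _ => div_nonneg (abs_nonneg _) (hy e).le) (Finset.mem_univ e)
      rw [← div_lt_iff₀ (hy e)]
      linarith
  set α : E → ℝ := fun e => ((y e).re + (y e).im / M) / 2 with hα
  set β : E → ℝ := fun e => ((y e).re - (y e).im / M) / 2 with hβ
  have hdiv : ∀ e, |(y e).im / M| < (y e).re := by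
    intro e
    rw [abs_div, abs_of_pos hM1, div_lt_iff₀ hM1, mul_comm]
    exact hM e
  have hαpos : ∀ e, 0 < α e := fun e => by
    have := (abs_lt.mp (hdiv e)).1
    simp only [hα]; linarith
  have hβpos : ∀ e, 0 < β e := fun e => by
    have := (abs_lt.mp (hdiv e)).2
    simp only [hβ]; linarith
  have hne : (1 - M * Complex.I : ℂ) ≠ 0 := by
    intro hh
    have := congrArg Complex.re hh
    simp at this
  have hMc : (M : ℂ) ≠ 0 := by exact_mod_cast hM1.ne'
  set z : ℂ := (1 + M * Complex.I) / (1 - M * Complex.I) with hz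
  have hzs : z ∈ Complex.slitPlane := by
    rw [Complex.mem_slitPlane_iff]
    right
    have hnn : (0:ℝ) < 1 + M * M := by positivity
    have : z.im = 2 * M / (1 + M * M) := by
      rw [hz, Complex.div_im]
      simp [Complex.normSq_apply]
      ring
    rw [this]
    positivity
  have hβ0 : MvPolynomial.eval (fun e => (β e : ℂ)) P = 0 := by
    refine h α β (fun e => (hαpos e).le) (fun e => (hβpos e).le) z hzs ?_
    have hy2 : y = fun e => (1 - M * Complex.I : ℂ) * ((α e : ℂ) * z + (β e : ℂ)) := by
      funext e
      have e1 : (1 - M * Complex.I : ℂ) * ((α e : ℂ) * z + (β e : ℂ))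
          = (α e : ℂ) * (1 + M * Complex.I) + (β e : ℂ) * (1 - M * Complex.I) := by
        rw [hz]; field_simp
      rw [e1]
      conv_lhs => rw [← Complex.re_add_im (y e)]
      simp only [hα, hβ]
      push_cast
      field_simp
      ring
    rw [hy2, aux_hom P r hhom] at h0
    exact (mul_eq_zero.mp h0).resolve_left (pow_ne_zero r hne)
  apply hP0
  refine MvPolynomial.funext_set (fun e => (fun t : ℝ => (t : ℂ)) '' Set.Icc 0 (β e)) ?_ ?_
  · intro e
    exact (Set.Icc_infinite (hβpos e)).image Complex.ofReal_injective.injOn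
  · intro x hx
    choose t ht htx using fun e => hx e (Set.mem_univ e)
    have hx' : x = fun e => (t e : ℂ) := funext fun e => (htx e).symm
    rw [hx', map_zero]
    refine h (fun e => β e - t e) t (fun e => by linarith [(ht e).2]) (fun e => (ht e).1) 1
      Complex.one_mem_slitPlane ?_
    rw [← hβ0]
    congr 2
    funext e
    push_cast
    ring

/-- Lemma 3.5 ([COSW], Proposition 5.2): a nonzero homogeneous polynomial `P` has the
half-plane property iff for all families of nonnegative reals `a, b`, the univariate
polynomial `P(a·x + b)` is identically zero or has only real nonpositive zeros. -/
theorem homogeneous_hpp_iff_real_rooted_substitutions {E : Type*} [Fintype E]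
    (P : MvPolynomial E ℂ) (r : ℕ) (hP0 : P ≠ 0) (hhom : P.IsHomogeneous r) :
    HPPpoly P ↔
      ∀ a b : E → ℝ, (∀ e, 0 ≤ a e) → (∀ e, 0 ≤ b e) →
        ∀ f : Polynomial ℂ,
          f = MvPolynomial.aeval
            (fun e => Polynomial.C ((a e : ℝ) : ℂ) * Polynomial.X +
              Polynomial.C ((b e : ℝ) : ℂ)) P →
          (f = 0 ∨ ∀ z : ℂ, f.eval z = 0 → z.im = 0 ∧ z.re ≤ 0) := by
  constructor
  · intro h a b ha hb f hf
    by_cases hex : ∃ z : ℂ, f.eval z = 0 ∧ z ∈ Complex.slitPlane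
    · obtain ⟨z, hz, hzs⟩ := hex
      left
      rw [hf]
      refine aux_forward P r hhom h a b ha hb z hzs ?_
      rw [← aux_eval, ← hf, hz]
    · right
      intro z hz
      by_contra hcon
      refine hex ⟨z, hz, ?_⟩
      rw [Complex.mem_slitPlane_iff]
      by_cases him : z.im = 0
      · left
        by_contra hre
        exact hcon ⟨him, not_lt.mp hre⟩
      · right
        exact him
  · intro h
    refine aux_backward P r hP0 hhom ?_
    intro a b ha hb z hz h0
    rcases h a b ha hb _ rfl with hf | hf
    · have := aux_eval P a b 0
      rw [hf] at this
      simpa using this.symm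
    · exfalso
      obtain ⟨h1, h2⟩ := hf z (by rw [aux_eval]; exact h0)
      rcases Complex.mem_slitPlane_iff.mp hz with h3 | h3
      · linarith
      · exact h3 h1
end
end
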